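/- Let R be a commutative noetherian ring with identity of Krull dimension dim R ≤ 2, and let a be an ideal of R. Then the local cohomology module H^i_a(M) is a-cofinite for every i and every finitely generated R-module M. -/

import Mathlib

universe u

open CategoryTheory

/-- `Ext^i_R(R/a, M)` as an `R`-module, for `M : ModuleCat R`. -/
noncomputable def extQuot {R : Type u} [CommRing R] (a : Ideal R) (i : ℕ)
    (M : ModuleCat.{u} R) : ModuleCat.{u} R :=
  ((Ext R (ModuleCat.{u} R) i).obj (Opposite.op (ModuleCat.of R (R ⧸ a)))).obj M

/-- An `R`-module `M` is `a`-cofinite if `Supp M ⊆ V(a)` and `Ext^i_R(R/a, M)` is a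
finitely generated `R`-module for every `i ≥ 0`. -/
def IsCofinite {R : Type u} [CommRing R] (a : Ideal R) (M : ModuleCat.{u} R) : Prop :=
  Module.support R M ⊆ PrimeSpectrum.zeroLocus (a : Set R) ∧
    ∀ i : ℕ, Module.Finite R (extQuot a i M)


namespace CofProof

section Alg
variable {R : Type u} [CommRing R]

/-- Artinian modules whose submodule annihilated by `S` is noetherian. -/
def AC (S : Set R) (M : Type u) [AddCommGroup M] [Module R M] : Prop :=
  IsArtinian R M ∧ IsNoetherian R (Submodule.torsionBySet R M S)

variable {A B C : Type u} [AddCommGroup A] [Module R A] [AddCommGroup B] [Module R B]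
  [AddCommGroup C] [Module R C]

/-- induced map on torsion -/
def tmap (S : Set R) (f : A →ₗ[R] B) :
    Submodule.torsionBySet R A S →ₗ[R] Submodule.torsionBySet R B S :=
  f.restrict (fun m hm => by
    rw [Submodule.mem_torsionBySet_iff] at hm ⊢
    intro a; rw [← map_smul, hm a, map_zero])

lemma tmap_inj (S : Set R) (f : A →ₗ[R] B) (hf : Function.Injective f) :
    Function.Injective (tmap S f) := by
  intro x y h
  apply Subtype.ext
  apply hf
  exact congrArg Subtype.val h

lemma AC.of_injective {S : Set R} (hB : AC S B) (f : A →ₗ[R] B) (hf : Function.Injective f) :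
    AC S A := by
  obtain ⟨h1, h2⟩ := hB
  exact ⟨isArtinian_of_injective f hf, isNoetherian_of_injective (tmap S f) (tmap_inj S f hf)⟩

lemma isNoeth_mid (f : A →ₗ[R] B) (g : B →ₗ[R] C) (h : ∀ b, g b = 0 → ∃ a, f a = b)
    (hA : IsNoetherian R A) (hC : IsNoetherian R C) : IsNoetherian R B := by
  have h1 : IsNoetherian R (LinearMap.ker g) := by
    have : LinearMap.ker g ≤ LinearMap.range f := fun b hb => h b hb
    exact isNoetherian_of_le this
  have h2 : IsNoetherian R (LinearMap.range g) := isNoetherian_of_le le_top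
  exact isNoetherian_of_range_eq_ker (LinearMap.ker g).subtype g.rangeRestrict (by simp)

lemma isArt_mid (f : A →ₗ[R] B) (g : B →ₗ[R] C) (h : ∀ b, g b = 0 → ∃ a, f a = b)
    (hA : IsArtinian R A) (hC : IsArtinian R C) : IsArtinian R B := by
  have h1 : IsArtinian R (LinearMap.ker g) := by
    have : LinearMap.ker g ≤ LinearMap.range f := fun b hb => h b hb
    have h3 : IsArtinian R (LinearMap.range f) := isArtinian_of_surjective _ f.rangeRestrict f.surjective_rangeRestrict
    exact isArtinian_of_le this
  have h2 : IsArtinian R (LinearMap.range g) := isArtinian_of_le le_top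
  exact isArtinian_of_range_eq_ker (LinearMap.ker g).subtype g.rangeRestrict (by simp)

lemma AC.of_ext {S : Set R} (hA : AC S A) (hC : AC S C) (f : A →ₗ[R] B) (g : B →ₗ[R] C)
    (hf : Function.Injective f) (h : ∀ b, g b = 0 → ∃ a, f a = b) : AC S B := by
  refine ⟨isArt_mid f g h hA.1 hC.1, isNoeth_mid (tmap S f) (tmap S g) ?_ hA.2 hC.2⟩
  intro b hb
  obtain ⟨a, ha⟩ := h b.1 (congrArg Subtype.val hb)
  refine ⟨⟨a, ?_⟩, Subtype.ext ha⟩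
  have := b.2
  rw [Submodule.mem_torsionBySet_iff] at this ⊢
  intro s
  apply hf
  rw [map_smul, ha, this s, map_zero]

/-- replacing a generator by a power -/
lemma noeth_pow (x : R) (S : Set R) (M : Type u) [AddCommGroup M] [Module R M]
    (h : IsNoetherian R (Submodule.torsionBySet R M (insert x S))) (k : ℕ) :
    IsNoetherian R (Submodule.torsionBySet R M (insert (x ^ k) S)) := by
  induction k with
  | zero =>
    have : Submodule.torsionBySet R M (insert (x ^ 0) S) = ⊥ := by
      rw [eq_bot_iff]
      intro m hm
      rw [Submodule.mem_torsionBySet_iff] at hm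
      simpa using hm ⟨x ^ 0, Set.mem_insert _ _⟩
    rw [this]; infer_instance
  | succ k ih =>
    have key : ∀ m ∈ Submodule.torsionBySet R M (insert (x ^ (k+1)) S),
        x • m ∈ Submodule.torsionBySet R M (insert (x ^ k) S) := by
      intro m hm
      rw [Submodule.mem_torsionBySet_iff] at hm ⊢
      rintro ⟨s, rfl | hs⟩
      · simpa [smul_smul, pow_succ] using hm ⟨x ^ (k+1), Set.mem_insert _ _⟩
      · have := hm ⟨s, Set.mem_insert_of_mem _ hs⟩
        simp only at this ⊢
        rw [smul_comm, this, smul_zero]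
    have key2 : Submodule.torsionBySet R M (insert x S) ≤ Submodule.torsionBySet R M (insert (x ^ (k+1)) S) := by
      intro m hm
      rw [Submodule.mem_torsionBySet_iff] at hm ⊢
      rintro ⟨s, rfl | hs⟩
      · have := hm ⟨x, Set.mem_insert _ _⟩
        simp only at this ⊢
        rw [pow_succ, mul_smul, this, smul_zero]
      · exact hm ⟨s, Set.mem_insert_of_mem _ hs⟩
    refine isNoeth_mid (Submodule.inclusion key2) ((LinearMap.lsmul R M x).restrict key) ?_ h ih
    rintro ⟨m, hm⟩ h0
    have h0' : x • m = 0 := congrArg Subtype.val h0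
    refine ⟨⟨m, ?_⟩, rfl⟩
    rw [Submodule.mem_torsionBySet_iff] at hm ⊢
    rintro ⟨s, rfl | hs⟩
    · exact h0'
    · exact hm ⟨s, Set.mem_insert_of_mem _ hs⟩

/-- `AC` for `insert` in terms of the kernel of multiplication -/
lemma AC.torsionBy {x : R} {S : Set R} (h : AC (insert x S) A) (k : ℕ) :
    AC S (Submodule.torsionBy R A (x ^ k)) := by
  have := h.1
  refine ⟨inferInstance, ?_⟩
  have := noeth_pow x S A h.2 k
  let φ : Submodule.torsionBySet R (Submodule.torsionBy R A (x ^ k)) S →ₗ[R]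
     Submodule.torsionBySet R A (insert (x ^ k) S) :=
    LinearMap.codRestrict _ ((Submodule.subtype _).comp (Submodule.subtype _)) (by
      rintro ⟨⟨m, hm⟩, hm2⟩
      rw [Submodule.mem_torsionBySet_iff] at hm2 ⊢
      rintro ⟨s, rfl | hs⟩
      · simpa using hm
      · exact congrArg Subtype.val (hm2 ⟨s, hs⟩))
  refine isNoetherian_of_injective φ ?_
  intro a b hab
  have h1 : (φ a).1 = (φ b).1 := congrArg Subtype.val hab
  exact Subtype.ext (Subtype.ext h1)

lemma AC.of_torsionBy {x : R} {S : Set R} (hA : IsArtinian R A) (k : ℕ) (hk : 0 < k)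
    (h : AC S (Submodule.torsionBy R A (x ^ k))) : AC (insert x S) A := by
  refine ⟨hA, ?_⟩
  have := h.2
  have key : ∀ m ∈ Submodule.torsionBySet R A (insert x S), m ∈ Submodule.torsionBy R A (x ^ k) := by
    intro m hm
    rw [Submodule.mem_torsionBySet_iff] at hm
    have hx0 := hm ⟨x, Set.mem_insert _ _⟩
    simp only at hx0
    obtain ⟨k, rfl⟩ := Nat.exists_eq_succ_of_ne_zero hk.ne'
    rw [Submodule.mem_torsionBy_iff, pow_succ, mul_smul, hx0, smul_zero]
  let φ : Submodule.torsionBySet R A (insert x S) →ₗ[R]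
     Submodule.torsionBySet R (Submodule.torsionBy R A (x ^ k)) S :=
    LinearMap.codRestrict _ (Submodule.inclusion key) (by
      rintro ⟨m, hm⟩
      rw [Submodule.mem_torsionBySet_iff] at hm ⊢
      rintro ⟨s, hs⟩
      exact Subtype.ext (hm ⟨s, Set.mem_insert_of_mem _ hs⟩))
  refine isNoetherian_of_injective φ ?_
  intro a b hab
  have := congrArg Subtype.val (congrArg Subtype.val hab)
  exact Subtype.ext this

/-- In an artinian module, powers of `x` stabilise. -/
lemma art_stab (hA : IsArtinian R A) (x : R) :
    ∃ k, 0 < k ∧ ∀ n, k ≤ n → ∀ m : A, ∃ m' : A, x ^ n • (x ^ n • m') = x ^ n • m := by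
  obtain ⟨k, hk⟩ := IsArtinian.monotone_stabilizes (R := R) (M := A)
    ⟨fun n => OrderDual.toDual (LinearMap.range (LinearMap.lsmul R A (x ^ n))), by
      intro a b hab
      change LinearMap.range (LinearMap.lsmul R A (x ^ b)) ≤ LinearMap.range (LinearMap.lsmul R A (x ^ a))
      rintro _ ⟨m, rfl⟩
      refine ⟨x ^ (b - a) • m, ?_⟩
      simp only [LinearMap.lsmul_apply, smul_smul, ← pow_add]
      congr 2; omega⟩
  refine ⟨k + 1, by omega, fun n hn m => ?_⟩
  have h1 := hk n (by omega)
  have h2 := hk (n + n) (by omega)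
  have h3 : LinearMap.range (LinearMap.lsmul R A (x ^ n)) = LinearMap.range (LinearMap.lsmul R A (x ^ (n+n))) := by
    have := h1.symm.trans h2
    exact this
  have h4 : x ^ n • m ∈ LinearMap.range (LinearMap.lsmul R A (x ^ n)) := ⟨m, rfl⟩
  rw [h3] at h4
  obtain ⟨m', hm'⟩ := h4
  refine ⟨m', ?_⟩
  simpa [smul_smul, pow_add] using hm'

theorem AC.of_surjective {S : Set R} (hS : S.Finite) : ∀ {A C : Type u} [AddCommGroup A] [Module R A]
    [AddCommGroup C] [Module R C] (_ : AC S A) (g : A →ₗ[R] C) (_ : Function.Surjective g), AC S C := by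
  induction S, hS using Set.Finite.induction_on with
  | empty =>
    intro A C _ _ _ _ hA g hg
    have h1 := hA.1
    refine ⟨isArtinian_of_surjective _ g hg, ?_⟩
    have h2 := hA.2
    have h3 : Submodule.torsionBySet R A ∅ = ⊤ := by
      rw [eq_top_iff]; intro m _; rw [Submodule.mem_torsionBySet_iff]; simp
    rw [h3] at h2
    have h4 : IsNoetherian R A := isNoetherian_top_iff.mp h2
    have : IsNoetherian R C := isNoetherian_of_surjective g (LinearMap.range_eq_top.mpr hg)
    infer_instance
  | @insert x S hxS hS ih =>
    intro A C _ _ _ _ hA g hg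
    have hCart : IsArtinian R C := by
      have := hA.1; exact isArtinian_of_surjective _ g hg
    let B := LinearMap.ker g
    have hB : AC (insert x S) B := hA.of_injective B.subtype Subtype.val_injective
    obtain ⟨k, hk, hst⟩ := art_stab hB.1 x
    refine AC.of_torsionBy hCart k hk ?_
    -- cokernel of x^k on B
    have hq : AC S (B ⧸ LinearMap.range (LinearMap.lsmul R B (x ^ k))) := by
      refine ih (hB.torsionBy k) ((Submodule.mkQ _).comp (Submodule.subtype _)) ?_
      intro b
      obtain ⟨b, rfl⟩ := Submodule.mkQ_surjective _ b
      obtain ⟨b', hb'⟩ := hst k le_rfl b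
      refine ⟨⟨b - x ^ k • b', ?_⟩, ?_⟩
      · rw [Submodule.mem_torsionBy_iff, smul_sub, hb', sub_self]
      · simp only [LinearMap.comp_apply, Submodule.subtype_apply, map_sub]
        rw [sub_eq_self]
        simp only [Submodule.mkQ_apply, Submodule.Quotient.mk_eq_zero]
        exact ⟨b', rfl⟩
    -- image of the torsion of A
    let f : Submodule.torsionBy R A (x ^ k) →ₗ[R] Submodule.torsionBy R C (x ^ k) :=
      g.restrict (fun m hm => by
        rw [Submodule.mem_torsionBy_iff] at hm ⊢; rw [← map_smul, hm, map_zero])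
    have hf : ∀ a, (f a : C) = g a.1 := fun a => rfl
    have hr : AC S (LinearMap.range f) := ih (hA.torsionBy k) f.rangeRestrict f.surjective_rangeRestrict
    have hCT : IsArtinian R (Submodule.torsionBy R C (x ^ k)) := inferInstance
    -- quotient by the image embeds in hq
    let S' := hg.hasRightInverse.choose
    have hS' : ∀ c, g (S' c) = c := hg.hasRightInverse.choose_spec
    let δ : Submodule.torsionBy R C (x ^ k) →ₗ[R] B ⧸ LinearMap.range (LinearMap.lsmul R B (x ^ k)) :=
      { toFun := fun c => Submodule.mkQ _ ⟨x ^ k • S' c.1, by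
          have := c.2
          rw [Submodule.mem_torsionBy_iff] at this
          change g _ = 0
          rw [map_smul, hS', this]⟩
        map_add' := by
          rintro ⟨c, hc⟩ ⟨d, hd⟩
          rw [← map_add, ← sub_eq_zero, ← map_sub]
          simp only [Submodule.mkQ_apply, Submodule.Quotient.mk_eq_zero]
          refine ⟨⟨S' (c + d) - S' c - S' d, ?_⟩, ?_⟩
          · change g _ = 0
            simp [hS']
          · apply Subtype.ext
            simp [smul_sub]
            abel
        map_smul' := by
          rintro r ⟨c, hc⟩
          rw [RingHom.id_apply, ← LinearMap.map_smul (Submodule.mkQ _), ← sub_eq_zero, ← map_sub]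
          simp only [Submodule.mkQ_apply, Submodule.Quotient.mk_eq_zero]
          refine ⟨⟨S' (r • c) - r • S' c, ?_⟩, ?_⟩
          · change g _ = 0
            simp [hS']
          · apply Subtype.ext
            simp [smul_sub, smul_comm r] }
    refine AC.of_ext hr hq (LinearMap.range f).subtype δ Subtype.val_injective ?_
    rintro ⟨c, hc⟩ h0
    have h0' : Submodule.Quotient.mk (p := LinearMap.range (LinearMap.lsmul R B (x ^ k))) _ = 0 := h0
    rw [Submodule.Quotient.mk_eq_zero] at h0'
    obtain ⟨b, hb⟩ := h0'
    have hb' : x ^ k • (b : A) = x ^ k • S' c := congrArg Subtype.val hb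
    refine ⟨⟨⟨c, hc⟩, ⟨⟨S' c - b, ?_⟩, ?_⟩⟩, rfl⟩
    · rw [Submodule.mem_torsionBy_iff, smul_sub, hb', sub_self]
    · apply Subtype.ext
      rw [hf]
      have : g b = 0 := b.2
      rw [map_sub, hS', this, sub_zero]

theorem AC.mid {S : Set R} (hS : S.Finite) (hA : AC S A) (hC : AC S C) (f : A →ₗ[R] B) (g : B →ₗ[R] C)
    (h : ∀ b, g b = 0 → ∃ a, f a = b) : AC S B := by
  refine AC.of_ext (hA.of_surjective hS f.rangeRestrict f.surjective_rangeRestrict) hC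
    (LinearMap.range f).subtype g Subtype.val_injective ?_
  intro b hb
  exact ⟨⟨b, h b hb⟩, rfl⟩

/-- Melkersson's lemma. -/
theorem art_of_torsion (x : R) (ht : ∀ m : A, ∃ n : ℕ, x ^ n • m = 0)
    (h : IsArtinian R (Submodule.torsionBy R A x)) : IsArtinian R A := by
  rw [← monotone_stabilizes_iff_artinian]
  intro N
  have hN : ∀ i j, i ≤ j → OrderDual.ofDual (N j) ≤ OrderDual.ofDual (N i) := fun i j hij => N.monotone hij
  let F : ℕ → ℕ → Submodule R (Submodule.torsionBy R A x) := fun n j =>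
    ((OrderDual.ofDual (N j)).map (LinearMap.lsmul R A (x ^ n))).comap (Submodule.subtype _)
  have hF : ∀ n j (m : Submodule.torsionBy R A x), m ∈ F n j ↔ ∃ y ∈ OrderDual.ofDual (N j), x ^ n • y = m.1 := by
    intro n j m; rfl
  have hFn : ∀ n n' j, n ≤ n' → F n' j ≤ F n j := by
    intro n n' j hnn m hm
    rw [hF] at hm ⊢
    obtain ⟨y, hy, hym⟩ := hm
    refine ⟨x ^ (n' - n) • y, Submodule.smul_mem _ _ hy, ?_⟩
    rw [smul_smul, ← pow_add, ← hym]; congr 2; omega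
  have hFj : ∀ n j j', j ≤ j' → F n j' ≤ F n j := by
    intro n j j' hjj m hm
    rw [hF] at hm ⊢
    obtain ⟨y, hy, hym⟩ := hm
    exact ⟨y, hN _ _ hjj hy, hym⟩
  -- diagonal stabilises
  obtain ⟨k, hk⟩ := IsArtinian.monotone_stabilizes (R := R) (M := Submodule.torsionBy R A x)
    ⟨fun n => OrderDual.toDual (F n n), fun a b hab => (hFn a b b hab).trans (hFj a a b hab)⟩
  have hk' : ∀ m, k ≤ m → F k k = F m m := fun m hm => hk m hm
  have hst : ∀ n, ∃ j, ∀ j', j ≤ j' → F n j = F n j' := by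
    intro n
    obtain ⟨j, hj⟩ := IsArtinian.monotone_stabilizes (R := R) (M := Submodule.torsionBy R A x)
      ⟨fun j => OrderDual.toDual (F n j), fun a b hab => hFj n a b hab⟩
    exact ⟨j, fun j' hj' => hj j' hj'⟩
  choose J hJ using hst
  let J0 := max k ((Finset.range (k+1)).sup J)
  have hall : ∀ n j, J0 ≤ j → F n J0 ≤ F n j := by
    intro n j hj
    by_cases hn : n ≤ k
    · have h1 : J n ≤ J0 := le_max_of_le_right (Finset.le_sup (f := J) (Finset.mem_range.mpr (by omega)))
      rw [← hJ n J0 h1, ← hJ n j (h1.trans hj)]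
    · push Not at hn
      have h1 : F n J0 ≤ F k k := (hFn k n J0 hn.le).trans (hFj k k J0 (le_max_left _ _))
      refine h1.trans ?_
      rw [hk' (max n j) (by omega)]
      exact (hFn n (max n j) _ (le_max_left _ _)).trans (hFj n j _ (le_max_right _ _))
  refine ⟨J0, fun j hj => ?_⟩
  apply le_antisymm
  · exact N.monotone hj
  change OrderDual.ofDual (N J0) ≤ OrderDual.ofDual (N j)
  have main : ∀ n, ∀ m ∈ OrderDual.ofDual (N J0), x ^ n • m = 0 → m ∈ OrderDual.ofDual (N j) := by
    intro n
    induction n with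
    | zero => intro m _ h0; simp at h0; rw [h0]; exact Submodule.zero_mem _
    | succ n ih =>
      intro m hm h0
      have h1 : (⟨x ^ n • m, by rw [Submodule.mem_torsionBy_iff, smul_smul, ← pow_succ', h0]⟩ :
        Submodule.torsionBy R A x) ∈ F n J0 := (hF _ _ _).mpr ⟨m, hm, rfl⟩
      obtain ⟨y, hy, hym⟩ := (hF _ _ _).mp (hall n j hj h1)
      have h2 : m - y ∈ OrderDual.ofDual (N j) := by
        apply ih _ (Submodule.sub_mem _ hm (hN _ _ hj hy))
        rw [smul_sub]; simp only at hym; rw [hym, sub_self]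
      simpa using Submodule.add_mem _ h2 hy
  intro m hm
  obtain ⟨n, hn⟩ := ht m
  exact main n m hm hn

end Alg
end CofProof


namespace CofProof
section LCdef
open Abelian
variable {R : Type u} [CommRing R] (a : Ideal R)

/-- `R / a^t` -/
abbrev Qt (t : ℕ) : ModuleCat.{u} R := ModuleCat.of R (R ⧸ a ^ t)

/-- transition maps -/
abbrev tr {s t : ℕ} (h : s ≤ t) : Qt a t ⟶ Qt a s :=
  ModuleCat.ofHom (Submodule.mapQ _ _ LinearMap.id (Ideal.pow_le_pow_right h))

lemma tr_self (s : ℕ) : tr a (le_refl s) = 𝟙 _ := by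
  apply ModuleCat.hom_ext
  apply LinearMap.ext
  intro x
  obtain ⟨x, rfl⟩ := Submodule.mkQ_surjective _ x
  rfl

lemma tr_comp {s t v : ℕ} (h : s ≤ t) (h' : t ≤ v) : tr a h' ≫ tr a h = tr a (h.trans h') := by
  apply ModuleCat.hom_ext
  apply LinearMap.ext
  intro x
  obtain ⟨x, rfl⟩ := Submodule.mkQ_surjective _ x
  rfl

/-- The direct system of Ext modules. -/
noncomputable abbrev sys (i : ℕ) (M : ModuleCat.{u} R) (s t : ℕ) (h : s ≤ t) :
    Ext (Qt a s) M i →ₗ[R] Ext (Qt a t) M i :=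
  (Ext.mk₀ (tr a h)).precompOfLinear R M (zero_add i)

lemma sys_apply (i : ℕ) (M : ModuleCat.{u} R) (s t : ℕ) (h : s ≤ t) (e : Ext (Qt a s) M i) :
    sys a i M s t h e = (Ext.mk₀ (tr a h)).comp e (zero_add i) := rfl

instance sysDirected (i : ℕ) (M : ModuleCat.{u} R) :
    DirectedSystem (fun t => Ext (Qt a t) M i) (fun s t h => sys a i M s t h) where
  map_self s x := by
    rw [sys_apply, tr_self, Ext.mk₀_id_comp]
  map_map s t v h h' x := by
    rw [sys_apply, sys_apply, sys_apply, ← tr_comp a h h', ← Ext.mk₀_comp_mk₀, Ext.comp_assoc]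
    all_goals omega

/-- local cohomology as a direct limit -/
abbrev LC (i : ℕ) (M : ModuleCat.{u} R) : Type u :=
  Module.DirectLimit (fun t => Ext (Qt a t) M i) (sys a i M)

/-- canonical maps -/
noncomputable abbrev LC.of (i : ℕ) (M : ModuleCat.{u} R) (t : ℕ) : Ext (Qt a t) M i →ₗ[R] LC a i M :=
  Module.DirectLimit.of R ℕ (fun t => Ext (Qt a t) M i) (sys a i M) t

variable {a}

lemma LC.exists_of {i : ℕ} {M : ModuleCat.{u} R} (x : LC a i M) :
    ∃ t e, LC.of a i M t e = x := Module.DirectLimit.exists_of x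

lemma LC.of_sys {i : ℕ} {M : ModuleCat.{u} R} {s t : ℕ} (h : s ≤ t) (e : Ext (Qt a s) M i) :
    LC.of a i M t (sys a i M s t h e) = LC.of a i M s e := Module.DirectLimit.of_f

lemma LC.zero_exact {i : ℕ} {M : ModuleCat.{u} R} {s : ℕ} {e : Ext (Qt a s) M i}
    (h : LC.of a i M s e = 0) : ∃ t, ∃ h : s ≤ t, sys a i M s t h e = 0 :=
  Module.DirectLimit.of.zero_exact h

variable (a) in
/-- action of Ext classes on local cohomology -/
noncomputable def LC.cmp {M N : ModuleCat.{u} R} {n i j : ℕ} (β : Ext M N n) (h : i + n = j) :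
    LC a i M →ₗ[R] LC a j N :=
  Module.DirectLimit.map (fun t => β.postcompOfLinear R (Qt a t) h) (by
    intro s t hst
    apply LinearMap.ext
    intro e
    change ((Ext.mk₀ (tr a hst)).comp e (zero_add i)).comp β h =
      (Ext.mk₀ (tr a hst)).comp (e.comp β h) (zero_add j)
    rw [Ext.comp_assoc]
    omega)

lemma LC.cmp_of {M N : ModuleCat.{u} R} {n i j : ℕ} (β : Ext M N n) (h : i + n = j) (t : ℕ)
    (e : Ext (Qt a t) M i) : LC.cmp a β h (LC.of a i M t e) = LC.of a j N t (e.comp β h) := by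
  unfold LC.cmp
  exact Module.DirectLimit.map_apply_of _ _ _

lemma LC.ex2 {S : ShortComplex (ModuleCat.{u} R)} (hS : S.ShortExact) {i : ℕ} (x : LC a i S.X₂)
    (hx : LC.cmp a (Ext.mk₀ S.g) (add_zero i) x = 0) :
    ∃ y : LC a i S.X₁, LC.cmp a (Ext.mk₀ S.f) (add_zero i) y = x := by
  obtain ⟨s, e, rfl⟩ := LC.exists_of x
  rw [LC.cmp_of] at hx
  obtain ⟨t, hst, h0⟩ := LC.zero_exact hx
  rw [sys_apply, ← Ext.comp_assoc _ _ _ (zero_add i) _ (by omega)] at h0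
  obtain ⟨y, hy⟩ := Ext.covariant_sequence_exact₂ _ hS _ h0
  refine ⟨LC.of a i _ t y, ?_⟩
  rw [LC.cmp_of, hy, ← LC.of_sys hst, sys_apply]

lemma LC.ex1 {S : ShortComplex (ModuleCat.{u} R)} (hS : S.ShortExact) {i j : ℕ} (hij : i + 1 = j)
    (x : LC a j S.X₁)
    (hx : LC.cmp a (Ext.mk₀ S.f) (add_zero j) x = 0) :
    ∃ y : LC a i S.X₃, LC.cmp a hS.extClass hij y = x := by
  obtain ⟨s, e, rfl⟩ := LC.exists_of x
  rw [LC.cmp_of] at hx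
  obtain ⟨t, hst, h0⟩ := LC.zero_exact hx
  rw [sys_apply, ← Ext.comp_assoc _ _ _ (zero_add j) _ (by omega)] at h0
  obtain ⟨y, hy⟩ := Ext.covariant_sequence_exact₁ _ hS _ h0 hij
  refine ⟨LC.of a i _ t y, ?_⟩
  rw [LC.cmp_of, hy, ← LC.of_sys hst, sys_apply]

lemma LC.ex3 {S : ShortComplex (ModuleCat.{u} R)} (hS : S.ShortExact) {i j : ℕ} (hij : i + 1 = j)
    (x : LC a i S.X₃)
    (hx : LC.cmp a hS.extClass hij x = 0) :
    ∃ y : LC a i S.X₂, LC.cmp a (Ext.mk₀ S.g) (add_zero i) y = x := by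
  obtain ⟨s, e, rfl⟩ := LC.exists_of x
  rw [LC.cmp_of] at hx
  obtain ⟨t, hst, h0⟩ := LC.zero_exact hx
  rw [sys_apply, ← Ext.comp_assoc _ _ _ (zero_add i) _ (by omega)] at h0
  obtain ⟨y, hy⟩ := Ext.covariant_sequence_exact₃ _ hS _ hij h0
  refine ⟨LC.of a i _ t y, ?_⟩
  rw [LC.cmp_of, hy, ← LC.of_sys hst, sys_apply]

/-- degree zero: injectivity -/
lemma LC.ex0 {S : ShortComplex (ModuleCat.{u} R)} (hS : S.ShortExact)
    (x : LC a 0 S.X₁)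
    (hx : LC.cmp a (Ext.mk₀ S.f) (add_zero 0) x = 0) : x = 0 := by
  obtain ⟨s, e, rfl⟩ := LC.exists_of x
  rw [LC.cmp_of] at hx
  obtain ⟨t, hst, h0⟩ := LC.zero_exact hx
  rw [sys_apply, ← Ext.comp_assoc _ _ _ (zero_add 0) _ (by omega)] at h0
  have := hS.mono_f
  have h1 := Ext.postcomp_mk₀_injective_of_mono (Qt a t) S.f
  rw [← LC.of_sys hst]
  have : sys a 0 S.X₁ s t hst e = 0 := by
    apply h1
    rw [map_zero]; exact h0
  rw [this, map_zero]

lemma ext_smul_eq_zero (I : Ideal R) {M : ModuleCat.{u} R} {i : ℕ} (r : R) (hr : r ∈ I)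
    (e : Ext (ModuleCat.of R (R ⧸ I)) M i) : r • e = 0 := by
  have h1 : r • e = (Ext.mk₀ (r • 𝟙 (ModuleCat.of R (R ⧸ I)))).comp e (zero_add i) := by
    simp [Ext.mk₀_smul]
  have h2 : r • 𝟙 (ModuleCat.of R (R ⧸ I)) = 0 := by
    apply ModuleCat.hom_ext
    apply LinearMap.ext
    intro x
    obtain ⟨x, rfl⟩ := Submodule.mkQ_surjective _ x
    change r • Submodule.mkQ I x = 0
    rw [← map_smul]
    simp only [Submodule.mkQ_apply, Submodule.Quotient.mk_eq_zero]
    exact I.mul_mem_right _ hr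
  rw [h1, h2, Ext.mk₀_zero, Ext.zero_comp]

lemma LC.tors {i : ℕ} {M : ModuleCat.{u} R} (x : LC a i M) : ∃ n, ∀ r ∈ a ^ n, r • x = 0 := by
  obtain ⟨s, e, rfl⟩ := LC.exists_of x
  refine ⟨s, fun r hr => ?_⟩
  rw [← map_smul, ext_smul_eq_zero _ r hr, map_zero]

lemma LC.cmp_smul {i : ℕ} {M : ModuleCat.{u} R} (r : R) (x : LC a i M) :
    LC.cmp a (Ext.mk₀ (r • 𝟙 M)) (add_zero i) x = r • x := by
  obtain ⟨s, e, rfl⟩ := LC.exists_of x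
  rw [LC.cmp_of, Ext.mk₀_smul]
  simp

lemma LC.injective_zero {i : ℕ} {M : ModuleCat.{u} R} [Injective M] (x : LC a (i+1) M) : x = 0 := by
  obtain ⟨s, e, rfl⟩ := LC.exists_of x
  rw [Ext.eq_zero_of_injective e, map_zero]

/-- the `a`-torsion submodule -/
def Gam (a : Ideal R) (M : Type u) [AddCommGroup M] [Module R M] : Submodule R M where
  carrier := {m | ∃ n, ∀ r ∈ a ^ n, r • m = 0}
  add_mem' := by
    rintro x y ⟨n, hn⟩ ⟨k, hk⟩
    refine ⟨max n k, fun r hr => ?_⟩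
    rw [smul_add, hn r (Ideal.pow_le_pow_right (le_max_left _ _) hr),
      hk r (Ideal.pow_le_pow_right (le_max_right _ _) hr), add_zero]
  zero_mem' := ⟨0, by simp⟩
  smul_mem' := by
    rintro c x ⟨n, hn⟩
    exact ⟨n, fun r hr => by rw [smul_comm, hn r hr, smul_zero]⟩

lemma mem_Gam {M : Type u} [AddCommGroup M] [Module R M] {m : M} :
    m ∈ Gam a M ↔ ∃ n, ∀ r ∈ a ^ n, r • m = 0 := Iff.rfl

/-- evaluation at 1 -/
noncomputable def ev (I : Ideal R) (M : ModuleCat.{u} R) : Ext (ModuleCat.of R (R ⧸ I)) M 0 →ₗ[R] M :=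
  (LinearMap.applyₗ (Submodule.Quotient.mk (1 : R) : R ⧸ I)).comp
    ((Ext.linearEquiv₀ (R := R) (X := ModuleCat.of R (R ⧸ I)) (Y := M)).trans
      (ModuleCat.homLinearEquiv (S := R))).toLinearMap

lemma ev_mk₀ (I : Ideal R) (M : ModuleCat.{u} R) (f : ModuleCat.of R (R ⧸ I) ⟶ M) :
    ev I M (Ext.mk₀ f) = f.hom (Submodule.Quotient.mk (1 : R) : R ⧸ I) := by
  have : Ext.linearEquiv₀ (R := R) (Ext.mk₀ f) = f := by
    apply (Ext.mk₀_bijective _ _).1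
    exact Ext.mk₀_linearEquiv₀_apply _
  simp [ev, this]
  rfl

lemma ev_inj (I : Ideal R) (M : ModuleCat.{u} R) : Function.Injective (ev I M) := by
  intro x y h
  obtain ⟨f, rfl⟩ := (Ext.mk₀_bijective _ _).2 x
  obtain ⟨g, rfl⟩ := (Ext.mk₀_bijective _ _).2 y
  rw [ev_mk₀, ev_mk₀] at h
  congr 1
  apply ModuleCat.hom_ext
  apply LinearMap.ext
  intro x
  obtain ⟨x, rfl⟩ := Submodule.mkQ_surjective _ x
  have : Submodule.mkQ I x = x • (Submodule.Quotient.mk (1 : R) : R ⧸ I) := by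
    rw [← Submodule.Quotient.mk_smul]; simp
  rw [this, map_smul, map_smul, h]

variable (a) in
/-- `H^0_a(M) → M` -/
noncomputable def LC.ev (M : ModuleCat.{u} R) : LC a 0 M →ₗ[R] M :=
  Module.DirectLimit.lift R ℕ _ _ (fun t => CofProof.ev (a ^ t) M) (by
    intro s t h e
    obtain ⟨f, rfl⟩ := (Ext.mk₀_bijective _ _).2 e
    rw [sys_apply, Ext.mk₀_comp_mk₀, ev_mk₀, ev_mk₀]
    rfl)

lemma LC.ev_of (M : ModuleCat.{u} R) (t : ℕ) (e) : LC.ev a M (LC.of a 0 M t e) = CofProof.ev (a ^ t) M e :=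
  Module.DirectLimit.lift_of _ _ _

lemma LC.ev_inj (M : ModuleCat.{u} R) : Function.Injective (LC.ev a M) := by
  rw [injective_iff_map_eq_zero]
  intro x hx
  obtain ⟨s, e, rfl⟩ := LC.exists_of x
  rw [LC.ev_of] at hx
  rw [(CofProof.ev_inj (a ^ s) M) (hx.trans (map_zero _).symm), map_zero]

lemma LC.ev_range (M : ModuleCat.{u} R) : LinearMap.range (LC.ev a M) = Gam a M := by
  apply le_antisymm
  · rintro _ ⟨x, rfl⟩
    obtain ⟨n, hn⟩ := LC.tors x
    exact ⟨n, fun r hr => by rw [← map_smul, hn r hr, map_zero]⟩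
  · rintro m ⟨n, hn⟩
    let f : Qt a n ⟶ M := ModuleCat.ofHom (Submodule.liftQ (a ^ n) (LinearMap.toSpanSingleton R M m) (by
      intro r hr
      rw [LinearMap.mem_ker, LinearMap.toSpanSingleton_apply]
      exact hn r hr))
    refine ⟨LC.of a 0 M n (Ext.mk₀ f), ?_⟩
    rw [LC.ev_of, ev_mk₀]
    change Submodule.liftQ _ _ _ (Submodule.Quotient.mk (1:R)) = m
    rw [Submodule.liftQ_apply]
    simp

/-- `H^0_a(M) = Γ_a(M)` -/
noncomputable def LC.equivGam (M : ModuleCat.{u} R) : LC a 0 M ≃ₗ[R] Gam a M :=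
  (LinearEquiv.ofInjective _ (LC.ev_inj M)).trans (LinearEquiv.ofEq _ _ (LC.ev_range M))

end LCdef
end CofProof


namespace CofProof
section Bridge
variable {R : Type u} [CommRing R] {X Y : ModuleCat.{u} R} (P : ProjectiveResolution X)

/-- the Hom complex -/
noncomputable abbrev KK (Y : ModuleCat.{u} R) : CochainComplex (ModuleCat.{u} R) ℕ := P.complex.linearYonedaObj R Y

/-- cocycles -/
def Zc (Y : ModuleCat.{u} R) (n : ℕ) : Submodule R (P.complex.X n ⟶ Y) where
  carrier := {f | P.complex.d (n+1) n ≫ f = 0}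
  add_mem' := by
    intro f g hf hg
    simp only [Set.mem_ofPred_eq] at *
    rw [Preadditive.comp_add, hf, hg, add_zero]
  zero_mem' := by simp
  smul_mem' := by
    intro r f hf
    simp only [Set.mem_ofPred_eq] at *
    rw [Linear.comp_smul, hf, smul_zero]

lemma Zc_prop {n : ℕ} (z : Zc P Y n) : P.complex.d (n+1) n ≫ z.1 = 0 := z.2

/-- inclusion of cocycles -/
noncomputable def zincl (Y : ModuleCat.{u} R) (n : ℕ) : ModuleCat.of R (Zc P Y n) ⟶ (KK P Y).X n :=
  ModuleCat.ofHom (Submodule.subtype (Zc P Y n))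

lemma KK_d_apply (n m : ℕ) (f : P.complex.X n ⟶ Y) :
    ((KK P Y).d n m).hom f = P.complex.d m n ≫ f := rfl

lemma zincl_d (n : ℕ) : zincl P Y n ≫ (KK P Y).d n (n+1) = 0 := by
  apply ModuleCat.hom_ext
  apply LinearMap.ext
  intro f
  exact f.2

/-- class of a cocycle -/
noncomputable def zcyc (Y : ModuleCat.{u} R) (n : ℕ) : ModuleCat.of R (Zc P Y n) ⟶ (KK P Y).cycles n :=
  (KK P Y).liftCycles (zincl P Y n) (n+1) (by simp) (zincl_d P n)

lemma zcyc_i (n : ℕ) : zcyc P Y n ≫ (KK P Y).iCycles n = zincl P Y n := by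
  simp [zcyc]

lemma zcyc_surj (n : ℕ) : Function.Surjective (zcyc P Y n).hom := by
  intro c
  have hc : ((KK P Y).d n (n+1)).hom (((KK P Y).iCycles n).hom c) = 0 := by
    have := (KK P Y).iCycles_d n (n+1)
    exact congrArg (fun f => f.hom c) this
  refine ⟨⟨((KK P Y).iCycles n).hom c, hc⟩, ?_⟩
  have hinj : Function.Injective ((KK P Y).iCycles n).hom :=
    (ModuleCat.mono_iff_injective _).mp inferInstance
  apply hinj
  have h := congrArg (fun (f : ModuleCat.of R (Zc P Y n) ⟶ (KK P Y).X n) =>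
    f.hom ⟨((KK P Y).iCycles n).hom c, hc⟩) (zcyc_i P (Y := Y) n)
  exact h

/-- class of a cocycle -/
noncomputable def zcl (Y : ModuleCat.{u} R) (n : ℕ) : ModuleCat.of R (Zc P Y n) ⟶ (KK P Y).homology n :=
  zcyc P Y n ≫ (KK P Y).homologyπ n

lemma zcl_surj (n : ℕ) : Function.Surjective (zcl P Y n).hom := by
  have h1 : Function.Surjective ((KK P Y).homologyπ n).hom := (ModuleCat.epi_iff_surjective _).mp inferInstance
  intro x
  obtain ⟨c, rfl⟩ := h1 x
  obtain ⟨z, rfl⟩ := zcyc_surj P n c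
  exact ⟨z, rfl⟩

lemma zcl_ker (n : ℕ) (z : Zc P Y n) : (zcl P Y n).hom z = 0 ↔
    ∃ b, ((KK P Y).d ((ComplexShape.up ℕ).prev n) n).hom b = z.1 := by
  have hex := ShortComplex.exact_of_g_is_cokernel (ShortComplex.mk _ _
    ((KK P Y).toCycles_comp_homologyπ ((ComplexShape.up ℕ).prev n) n)) ((KK P Y).homologyIsCokernel _ n rfl)
  have hinj : Function.Injective ((KK P Y).iCycles n).hom :=
    (ModuleCat.mono_iff_injective _).mp inferInstance
  rw [ShortComplex.moduleCat_exact_iff] at hex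
  have hz : ((KK P Y).iCycles n).hom ((zcyc P Y n).hom z) = z.1 :=
    congrArg (fun f => f.hom z) (zcyc_i P (Y := Y) n)
  constructor
  · intro h
    obtain ⟨b, hb⟩ := hex ((zcyc P Y n).hom z) h
    refine ⟨b, ?_⟩
    rw [← hz]
    have := (KK P Y).toCycles_i ((ComplexShape.up ℕ).prev n) n
    rw [← this]
    exact congrArg (fun c => ((KK P Y).iCycles n).hom c) hb
  · rintro ⟨b, hb⟩
    have h1 : ((KK P Y).toCycles ((ComplexShape.up ℕ).prev n) n).hom b = (zcyc P Y n).hom z := by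
      apply hinj
      rw [hz, ← hb]
      have := (KK P Y).toCycles_i ((ComplexShape.up ℕ).prev n) n
      rw [← this]; rfl
    have h2 := (KK P Y).toCycles_comp_homologyπ ((ComplexShape.up ℕ).prev n) n
    have : (zcl P Y n).hom z = ((KK P Y).homologyπ n).hom ((zcyc P Y n).hom z) := rfl
    rw [this, ← h1]
    exact congrArg (fun f => f.hom b) h2

/-- class of a cocycle in the old Ext -/
noncomputable def oldCl (Y : ModuleCat.{u} R) (n : ℕ) : Zc P Y n →ₗ[R] ((Ext R (ModuleCat.{u} R) n).obj (Opposite.op X)).obj Y :=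
  (zcl P Y n ≫ (P.isoExt n Y).inv).hom

lemma oldCl_surj (n : ℕ) : Function.Surjective (oldCl P Y n) := by
  have h1 : Function.Surjective (P.isoExt (R := R) n Y).inv.hom := (ModuleCat.epi_iff_surjective _).mp inferInstance
  exact h1.comp (zcl_surj P n)

lemma oldCl_ker (n : ℕ) (z : Zc P Y n) : oldCl P Y n z = 0 ↔ (zcl P Y n).hom z = 0 := by
  have h1 : Function.Injective (P.isoExt (R := R) n Y).inv.hom := (ModuleCat.mono_iff_injective _).mp inferInstance
  constructor
  · intro h
    apply h1
    rw [map_zero]; exact h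
  · intro h
    change (P.isoExt (R := R) n Y).inv.hom ((zcl P Y n).hom z) = 0
    rw [h, map_zero]

/-- class of a cocycle in the new Ext -/
noncomputable def newCl (Y : ModuleCat.{u} R) (n : ℕ) : Zc P Y n →ₗ[R] Abelian.Ext X Y n where
  toFun z := P.extMk z.1 (n+1) rfl (Zc_prop P z)
  map_add' z w := (P.add_extMk _ _ _ rfl (Zc_prop P z) (Zc_prop P w)).symm
  map_smul' r z := by
    rw [RingHom.id_apply, Abelian.Ext.smul_eq_comp_mk₀, P.extMk_comp_mk₀]
    congr 1

lemma newCl_surj (n : ℕ) : Function.Surjective (newCl P Y n) := by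
  intro x
  obtain ⟨f, hf, h⟩ := P.extMk_surjective x (n+1) rfl
  exact ⟨⟨f, hf⟩, h⟩

open CochainComplex HomComplex in
lemma newCl_ker (n : ℕ) (z : Zc P Y n) : newCl P Y n z = 0 ↔
    ∃ b, ((KK P Y).d ((ComplexShape.up ℕ).prev n) n).hom b = z.1 := by
  cases n with
  | succ n =>
    have h : (ComplexShape.up ℕ).prev (n+1) = n := by simp
    rw [h]
    exact P.extMk_eq_zero_iff z.1 (n+1+1) rfl z.2 n rfl
  | zero =>
    have h0 : (KK P Y).d ((ComplexShape.up ℕ).prev 0) 0 = 0 := by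
      apply HomologicalComplex.shape
      simp
    rw [h0]
    constructor
    · intro h
      refine ⟨0, ?_⟩
      change 0 = z.1
      change P.extMk z.1 _ rfl (Zc_prop P z) = 0 at h
      rw [← P.extEquivCohomologyClass.apply_eq_iff_eq, P.extEquivCohomologyClass_extMk,
        P.extEquivCohomologyClass_zero, CohomologyClass.mk_eq_zero_iff,
        Cocycle.toSingleMk_mem_coboundaries_iff _ _ _ _ _ 1 (by simp)] at h
      obtain ⟨g, hg⟩ := h
      have hz : Limits.IsZero (P.cochainComplex.X 1) :=
        CochainComplex.isZero_of_isStrictlyLE _ 0 _ (by simp)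
      have hg0 : P.cochainComplex.d (-((0 : ℕ) : ℤ)) 1 = 0 := hz.eq_of_tgt _ _
      rw [hg0, Limits.zero_comp] at hg
      rw [← cancel_epi (P.cochainComplexXIso (-((0 : ℕ) : ℤ)) 0 (by simp)).hom, ← hg,
        Limits.comp_zero]
    · rintro ⟨b, hb⟩
      have : z = 0 := Subtype.ext hb.symm
      rw [this, map_zero]

end Bridge
end CofProof


namespace CofProof
section Bridge2
variable {R : Type u} [CommRing R] {X X' Y : ModuleCat.{u} R} (P : ProjectiveResolution X)
  (P' : ProjectiveResolution X')

/-- the induced map on Hom complexes -/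
noncomputable def KKmap (Y : ModuleCat.{u} R) (φ : P'.complex ⟶ P.complex) : KK P Y ⟶ KK P' Y :=
  (HomologicalComplex.unopFunctor (ModuleCat.{u} R) (ComplexShape.down ℕ)).map
    ((((linearYoneda R (ModuleCat.{u} R)).obj Y).rightOp.mapHomologicalComplex _).map φ).op

lemma KKmap_f (φ : P'.complex ⟶ P.complex) (n : ℕ) (f : P.complex.X n ⟶ Y) :
    ((KKmap P P' Y φ).f n).hom f = φ.f n ≫ f := rfl

lemma homologyUnop_nat (φ : P'.complex ⟶ P.complex) (n : ℕ) :
    (HomologicalComplex.homologyUnop _ n).hom ≫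
    (HomologicalComplex.homologyMap ((((linearYoneda R (ModuleCat.{u} R)).obj Y).rightOp.mapHomologicalComplex _).map φ) n).unop =
    HomologicalComplex.homologyMap (KKmap P P' Y φ) n ≫ (HomologicalComplex.homologyUnop _ n).hom := by
  have h := HomologicalComplex.homologyOp_hom_naturality (KKmap P P' Y φ) n
  have h2 := congrArg Quiver.Hom.unop h
  exact h2

lemma isoExt_nat (g : X' ⟶ X) (φ : P'.complex ⟶ P.complex)
    (comm : φ.f 0 ≫ P.π.f 0 = P'.π.f 0 ≫ g) (n : ℕ) :
    (P.isoExt (R := R) n Y).inv ≫ ((Ext R (ModuleCat.{u} R) n).map g.op).app Y =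
    HomologicalComplex.homologyMap (KKmap P P' Y φ) n ≫ (P'.isoExt (R := R) n Y).inv := by
  have h := congrArg Quiver.Hom.unop (ProjectiveResolution.isoLeftDerivedObj_hom_naturality g P' P φ comm
    ((linearYoneda R (ModuleCat.{u} R)).obj Y).rightOp n)
  have h2 := homologyUnop_nat P P' (Y := Y) φ n
  have e1 : (P.isoExt (R := R) n Y).inv = (HomologicalComplex.homologyUnop _ n).hom ≫
    (P.isoLeftDerivedObj ((linearYoneda R (ModuleCat.{u} R)).obj Y).rightOp n).hom.unop := rfl
  have e2 : (P'.isoExt (R := R) n Y).inv = (HomologicalComplex.homologyUnop _ n).hom ≫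
    (P'.isoLeftDerivedObj ((linearYoneda R (ModuleCat.{u} R)).obj Y).rightOp n).hom.unop := rfl
  have e3 : ((Ext R (ModuleCat.{u} R) n).map g.op).app Y =
    ((((linearYoneda R (ModuleCat.{u} R)).obj Y).rightOp.leftDerived n).map g).unop := rfl
  rw [e1, e2, e3]
  refine (Category.assoc _ _ _).trans ?_
  refine (congrArg (fun t => (HomologicalComplex.homologyUnop _ n).hom ≫ t) h).trans ?_
  refine (Category.assoc _ _ _).symm.trans ?_
  refine (congrArg (fun t => t ≫ (P'.isoLeftDerivedObj ((linearYoneda R (ModuleCat.{u} R)).obj Y).rightOp n).hom.unop) h2).trans ?_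
  exact Category.assoc _ _ _

/-- pull back of cocycles -/
noncomputable def Zpull (φ : P'.complex ⟶ P.complex) {n : ℕ} (z : Zc P Y n) : Zc P' Y n :=
  ⟨φ.f n ≫ z.1, by
    change P'.complex.d (n+1) n ≫ φ.f n ≫ z.1 = 0
    rw [← φ.comm_assoc, Zc_prop, Limits.comp_zero]⟩

lemma oldCl_nat (g : X' ⟶ X) (φ : P'.complex ⟶ P.complex)
    (comm : φ.f 0 ≫ P.π.f 0 = P'.π.f 0 ≫ g) (n : ℕ) (z : Zc P Y n) :
    (((Ext R (ModuleCat.{u} R) n).map g.op).app Y).hom (oldCl P Y n z) =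
    oldCl P' Y n (Zpull P P' φ z) := by
  have h := isoExt_nat P P' (Y := Y) g φ comm n
  have h1 := congrArg (fun f => f.hom ((zcl P Y n).hom z)) h
  refine h1.trans ?_
  change (P'.isoExt (R := R) n Y).inv.hom _ = (P'.isoExt (R := R) n Y).inv.hom _
  congr 1
  have h2 := HomologicalComplex.homologyπ_naturality (KKmap P P' Y φ) n
  have h3 := congrArg (fun f => f.hom ((zcyc P Y n).hom z)) h2
  refine h3.trans ?_
  change ((KK P' Y).homologyπ n).hom _ = ((KK P' Y).homologyπ n).hom _
  congr 1
  have hinj : Function.Injective ((KK P' Y).iCycles n).hom :=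
    (ModuleCat.mono_iff_injective _).mp inferInstance
  apply hinj
  have h4 := congrArg (fun (f : ModuleCat.of R (Zc P' Y n) ⟶ (KK P' Y).X n) =>
    f.hom (Zpull P P' φ z)) (zcyc_i P' (Y := Y) n)
  refine Eq.trans ?_ h4.symm
  have h5 := HomologicalComplex.cyclesMap_i (KKmap P P' Y φ) n
  refine (congrArg (fun f => f.hom ((zcyc P Y n).hom z)) h5).trans ?_
  have h6 := congrArg (fun (f : ModuleCat.of R (Zc P Y n) ⟶ (KK P Y).X n) =>
    ((KKmap P P' Y φ).f n).hom (f.hom z)) (zcyc_i P (Y := Y) n)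
  exact h6

lemma newCl_nat (g : X' ⟶ X) (φ : P'.complex ⟶ P.complex)
    (comm : φ.f 0 ≫ P.π.f 0 = P'.π.f 0 ≫ g) (n : ℕ) (z : Zc P Y n) :
    (Abelian.Ext.mk₀ g).comp (newCl P Y n z) (zero_add n) =
    newCl P' Y n (Zpull P P' φ z) := by
  exact P.mk₀_comp_extMk z.1 (n+1) rfl (Zc_prop P z) (R' := P') (g := g)
    ⟨φ, comm.trans (by simp)⟩

/-- generic comparison of two quotients with the same kernel -/
noncomputable def quotCmp {A B C : Type*} [AddCommGroup A] [AddCommGroup B] [AddCommGroup C]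
    [Module R A] [Module R B] [Module R C] (f : A →ₗ[R] B) (g : A →ₗ[R] C)
    (hf : Function.Surjective f) (hg : Function.Surjective g) (h : ∀ x, f x = 0 ↔ g x = 0) : B ≃ₗ[R] C :=
  (f.quotKerEquivOfSurjective hf).symm.trans
    ((Submodule.quotEquivOfEq (LinearMap.ker f) (LinearMap.ker g) (by
      ext z
      rw [LinearMap.mem_ker, LinearMap.mem_ker, h])).trans
    (g.quotKerEquivOfSurjective hg))

lemma quotCmp_apply {A B C : Type*} [AddCommGroup A] [AddCommGroup B] [AddCommGroup C]
    [Module R A] [Module R B] [Module R C] (f : A →ₗ[R] B) (g : A →ₗ[R] C)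
    (hf : Function.Surjective f) (hg : Function.Surjective g) (h : ∀ x, f x = 0 ↔ g x = 0) (z : A) :
    quotCmp f g hf hg h (f z) = g z := by
  have : (f.quotKerEquivOfSurjective hf).symm (f z) = Submodule.Quotient.mk z := by
    rw [LinearEquiv.symm_apply_eq]; rfl
  unfold quotCmp
  rw [LinearEquiv.trans_apply, this]
  rfl

/-- comparison -/
noncomputable def extCmp (Y : ModuleCat.{u} R) (n : ℕ) :
    ((Ext R (ModuleCat.{u} R) n).obj (Opposite.op X)).obj Y ≃ₗ[R] Abelian.Ext X Y n :=
  quotCmp (oldCl P Y n) (newCl P Y n) (oldCl_surj P n) (newCl_surj P n)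
    (fun z => by rw [oldCl_ker, zcl_ker, newCl_ker])

lemma extCmp_oldCl (n : ℕ) (z : Zc P Y n) : extCmp P Y n (oldCl P Y n z) = newCl P Y n z :=
  quotCmp_apply _ _ _ _ _ _

lemma extCmp_nat (g : X' ⟶ X) (n : ℕ) (x : ((Ext R (ModuleCat.{u} R) n).obj (Opposite.op X)).obj Y) :
    extCmp P' Y n ((((Ext R (ModuleCat.{u} R) n).map g.op).app Y).hom x) =
    (Abelian.Ext.mk₀ g).comp (extCmp P Y n x) (zero_add n) := by
  obtain ⟨z, rfl⟩ := oldCl_surj P n x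
  have comm : (ProjectiveResolution.lift g P' P).f 0 ≫ P.π.f 0 = P'.π.f 0 ≫ g := by
    simpa using ProjectiveResolution.lift_commutes_zero g P' P
  rw [oldCl_nat P P' g _ comm, extCmp_oldCl, extCmp_oldCl, newCl_nat P P' g _ comm]

end Bridge2
end CofProof


namespace CofProof
section Bridge3
variable {R : Type u} [CommRing R] (a : Ideal R) (i : ℕ) (M : ModuleCat.{u} R)

/-- the diagram at M -/
noncomputable abbrev GG : ℕᵒᵖᵒᵖ ⥤ ModuleCat.{u} R :=
  localCohomology.diagram (localCohomology.idealPowersDiagram a) i ⋙ (evaluation _ _).obj M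

/-- index -/
abbrev oo (t : ℕ) : ℕᵒᵖᵒᵖ := Opposite.op (Opposite.op t)

/-- transition -/
abbrev ooh {s t : ℕ} (h : s ≤ t) : oo s ⟶ oo t := (homOfLE h).op.op

/-- comparison at level t -/
noncomputable def lvl (t : ℕ) : (GG a i M).obj (oo t) ≃ₗ[R] Abelian.Ext (Qt a t) M i :=
  extCmp (projectiveResolution (Qt a t)) M i

lemma lvl_nat {s t : ℕ} (h : s ≤ t) (x : (GG a i M).obj (oo s)) :
    lvl a i M t (((GG a i M).map (ooh h)).hom x) = sys a i M s t h (lvl a i M s x) := by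
  exact extCmp_nat (projectiveResolution (Qt a s)) (projectiveResolution (Qt a t)) (tr a h) i x

/-- comparison with the colimit -/
noncomputable def toCol : LC a i M →ₗ[R] (Limits.colimit (GG a i M) : ModuleCat.{u} R) :=
  Module.DirectLimit.lift R ℕ _ _ (fun t => (Limits.colimit.ι (GG a i M) (oo t)).hom.comp
    (lvl a i M t).symm.toLinearMap) (by
      intro s t h x
      have h1 : (lvl a i M t).symm (sys a i M s t h x) =
        ((GG a i M).map (ooh h)).hom ((lvl a i M s).symm x) := by
        rw [LinearEquiv.symm_apply_eq, lvl_nat, LinearEquiv.apply_symm_apply]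
      have h2 := Limits.colimit.w (GG a i M) (ooh h)
      have h3 := congrArg (fun f => f.hom ((lvl a i M s).symm x)) h2
      refine Eq.trans ?_ h3
      exact congrArg (Limits.colimit.ι (GG a i M) (oo t)).hom h1)

lemma toCol_of (t : ℕ) (x) : toCol a i M (LC.of a i M t x) =
    (Limits.colimit.ι (GG a i M) (oo t)).hom ((lvl a i M t).symm x) :=
  Module.DirectLimit.lift_of _ _ _

instance presGG : Limits.PreservesColimit (GG a i M) (forget (ModuleCat.{u} R)) := by
  have := Limits.preservesSmallestFilteredColimits_of_preservesFilteredColimits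
    (forget (ModuleCat.{u} R))
  have hf : IsFiltered ℕᵒᵖᵒᵖ := inferInstance
  have := Limits.PreservesFilteredColimitsOfSize.preserves_filtered_colimits
    (F := forget (ModuleCat.{u} R)) ℕᵒᵖᵒᵖ
  infer_instance

lemma toCol_surj : Function.Surjective (toCol a i M) := by
  intro y
  obtain ⟨t, x, hx⟩ := Limits.Concrete.colimit_exists_rep (GG a i M) y
  obtain ⟨⟨t⟩⟩ := t
  refine ⟨LC.of a i M t (lvl a i M t x), ?_⟩
  rw [toCol_of, LinearEquiv.symm_apply_apply]
  exact hx

lemma toCol_inj : Function.Injective (toCol a i M) := by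
  rw [injective_iff_map_eq_zero]
  intro y hy
  obtain ⟨s, x, rfl⟩ := LC.exists_of y
  rw [toCol_of] at hy
  obtain ⟨t, f, h⟩ := Limits.Concrete.colimit_rep_eq_zero R (GG a i M) (oo s) _ hy
  obtain ⟨⟨t⟩⟩ := t
  have hst : s ≤ t := leOfHom f.unop.unop
  have hf : f = ooh hst := Subsingleton.elim _ _
  subst hf
  rw [← LC.of_sys hst]
  have := lvl_nat a i M hst ((lvl a i M s).symm x)
  rw [LinearEquiv.apply_symm_apply] at this
  rw [← this]
  have h' : ((GG a i M).map (ooh hst)).hom ((lvl a i M s).symm x) = 0 := h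
  rw [h', map_zero, map_zero]

/-- comparison -/
noncomputable def lcEquiv : LC a i M ≃ₗ[R] ((localCohomology a i).obj M : ModuleCat.{u} R) :=
  (LinearEquiv.ofBijective (toCol a i M) ⟨toCol_inj a i M, toCol_surj a i M⟩).trans
    (Limits.colimitObjIsoColimitCompEvaluation
      (localCohomology.diagram (localCohomology.idealPowersDiagram a) i) M).symm.toLinearEquiv

end Bridge3
end CofProof


namespace CofProof
section D1
variable {R : Type u} [CommRing R] (a : Ideal R)

lemma unif_tors {N M : Type u} [AddCommGroup N] [Module R N] [AddCommGroup M] [Module R M]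
    [Module.Finite R N] (f : N →ₗ[R] M) (h : ∀ x, f x ∈ Gam a M) :
    ∃ n, ∀ r ∈ a ^ n, ∀ x, r • f x = 0 := by
  obtain ⟨s, hs⟩ := (inferInstance : Module.Finite R N).fg_top
  choose c hc using h
  refine ⟨s.sup c, fun r hr x => ?_⟩
  have hx : x ∈ Submodule.span R (s : Set N) := hs ▸ Submodule.mem_top
  induction hx using Submodule.span_induction with
  | mem x hx => exact hc x r (Ideal.pow_le_pow_right (Finset.le_sup hx) hr)
  | zero => simp
  | add x y _ _ hx hy => rw [map_add, smul_add, hx, hy, add_zero]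
  | smul t x _ hx => rw [map_smul, smul_comm, hx, smul_zero]

lemma gam_injective [IsNoetherianRing R] (E : Type u) [AddCommGroup E] [Module R E]
    [Module.Injective R E] : Module.Injective R (Gam a E) := by
  apply Module.Baer.injective
  intro J f
  obtain ⟨n, hn⟩ := unif_tors a ((Gam a E).subtype.comp f) (fun x => (f x).2)
  obtain ⟨k, hk⟩ := Ideal.exists_pow_inf_eq_pow_smul a (N := (J : Submodule R R))
  have hle : ∀ x (hx : x ∈ J), x ∈ a ^ (n + k) → f ⟨x, hx⟩ = 0 := by
    intro x hx hxa
    have h1 : x ∈ a ^ (n + k) • (⊤ : Submodule R R) ⊓ J := by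
      refine ⟨?_, hx⟩
      have := Submodule.smul_mem_smul hxa (Submodule.mem_top (x := (1 : R)))
      simpa using this
    rw [hk (n + k) (by omega), Nat.add_sub_cancel] at h1
    have h2 : x ∈ a ^ n • (J : Submodule R R) := Submodule.smul_mono le_rfl inf_le_right h1
    have h3 : ∀ y ∈ a ^ n • (J : Submodule R R), ∀ hy : y ∈ J, f ⟨y, hy⟩ = 0 := by
      intro y hy
      induction hy using Submodule.smul_induction_on' with
      | smul r hr m hm =>
        intro hy
        have : (⟨r • m, hy⟩ : J) = r • ⟨m, hm⟩ := rfl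
        rw [this, map_smul]
        exact Subtype.ext (hn r hr ⟨m, hm⟩)
      | add y hy z hz h h' =>
        intro hyz
        have e1 : y ∈ J := Submodule.smul_le_right hy
        have e2 : z ∈ J := Submodule.smul_le_right hz
        have : (⟨y + z, hyz⟩ : J) = ⟨y, e1⟩ + ⟨z, e2⟩ := rfl
        rw [this, map_add, h e1, h' e2, add_zero]
    exact h3 x h2 hx
  let q : Submodule R J := Submodule.comap (Submodule.subtype J) (a ^ (n + k) : Ideal R)
  let ψ : (J ⧸ q) →ₗ[R] E := q.liftQ ((Gam a E).subtype.comp f) (by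
    rintro ⟨x, hx⟩ hx'
    rw [LinearMap.mem_ker, LinearMap.comp_apply, hle x hx hx', map_zero])
  let ι : (J ⧸ q) →ₗ[R] (R ⧸ (a ^ (n + k) : Ideal R)) := q.mapQ (a ^ (n+k) : Ideal R) (Submodule.subtype J) le_rfl
  have hι : Function.Injective ι := by
    rw [injective_iff_map_eq_zero]
    intro y hy
    obtain ⟨y, rfl⟩ := Submodule.Quotient.mk_surjective _ y
    rw [Submodule.Quotient.mk_eq_zero]
    exact (Submodule.Quotient.mk_eq_zero (a ^ (n+k) : Ideal R)).mp hy
  obtain ⟨h, hh⟩ := Module.Injective.out ι hι ψ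
  refine ⟨LinearMap.codRestrict (Gam a E) (h.comp (Submodule.mkQ (a ^ (n+k) : Ideal R))) ?_, ?_⟩
  · intro c
    refine ⟨n + k, fun r hr => ?_⟩
    rw [← map_smul, LinearMap.comp_apply]
    have : Submodule.mkQ (a ^ (n+k) : Ideal R) (r • c) = 0 := by
      rw [Submodule.mkQ_apply, Submodule.Quotient.mk_eq_zero]
      exact Ideal.mul_mem_right _ _ hr
    rw [this, map_zero]
  · intro x hx
    apply Subtype.ext
    exact hh (Submodule.Quotient.mk ⟨x, hx⟩)

end D1
end CofProof


namespace CofProof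
section D2
open Abelian
variable {R : Type u} [CommRing R] (a : Ideal R)

/-- All Ext modules from `R/a` are noetherian. -/
def CC (N : ModuleCat.{u} R) : Prop :=
  ∀ i : ℕ, IsNoetherian R (Ext (ModuleCat.of R (R ⧸ a)) N i)

variable {a}

lemma CC.mid {S : ShortComplex (ModuleCat.{u} R)} (hS : S.ShortExact) (h1 : CC a S.X₁) (h3 : CC a S.X₃) :
    CC a S.X₂ := by
  intro i
  have := h1 i
  have := h3 i
  refine isNoeth_mid ((Ext.mk₀ S.f).postcompOfLinear R (ModuleCat.of R (R ⧸ a)) (add_zero i))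
    ((Ext.mk₀ S.g).postcompOfLinear R (ModuleCat.of R (R ⧸ a)) (add_zero i)) ?_ (h1 i) (h3 i)
  intro b hb
  exact Ext.covariant_sequence_exact₂ _ hS b hb

lemma CC.right {S : ShortComplex (ModuleCat.{u} R)} (hS : S.ShortExact) (h1 : CC a S.X₁) (h3 : CC a S.X₂) :
    CC a S.X₃ := by
  intro i
  have := h1 (i+1)
  have := h3 i
  refine isNoeth_mid ((Ext.mk₀ S.g).postcompOfLinear R (ModuleCat.of R (R ⧸ a)) (add_zero i))
    (hS.extClass.postcompOfLinear R (ModuleCat.of R (R ⧸ a)) (rfl : i + 1 = i + 1)) ?_ (h3 i) (h1 (i+1))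
  intro b hb
  exact Ext.covariant_sequence_exact₃ _ hS b rfl hb

lemma CC.left {S : ShortComplex (ModuleCat.{u} R)} (hS : S.ShortExact) (h1 : CC a S.X₂) (h3 : CC a S.X₃) :
    CC a S.X₁ := by
  intro i
  cases i with
  | zero =>
    have := h1 0
    refine isNoetherian_of_injective ((Ext.mk₀ S.f).postcompOfLinear R (ModuleCat.of R (R ⧸ a)) (add_zero 0)) ?_
    have := hS.mono_f
    exact Ext.postcomp_mk₀_injective_of_mono _ S.f
  | succ i =>
  have := h1 (i+1)
  have := h3 i
  refine isNoeth_mid (hS.extClass.postcompOfLinear R (ModuleCat.of R (R ⧸ a)) (rfl : i + 1 = i + 1))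
    ((Ext.mk₀ S.f).postcompOfLinear R (ModuleCat.of R (R ⧸ a)) (add_zero (i+1))) ?_ (h3 i) (h1 (i+1))
  intro b hb
  exact Ext.covariant_sequence_exact₁ _ hS b hb rfl

lemma CC.of_iso {M N : ModuleCat.{u} R} (e : M ≃ₗ[R] N) (h : CC a M) : CC a N := by
  intro i
  have := h i
  refine isNoetherian_of_injective ((Ext.mk₀ (ModuleCat.ofHom e.symm.toLinearMap : N ⟶ M)).postcompOfLinear R (ModuleCat.of R (R ⧸ a)) (add_zero i)) ?_
  intro x y hxy
  have h2 := congrArg (fun z => z.comp (Ext.mk₀ (ModuleCat.ofHom e.toLinearMap : M ⟶ N)) (add_zero i)) hxy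
  change (x.comp (Ext.mk₀ (ModuleCat.ofHom e.symm.toLinearMap : N ⟶ M)) (add_zero i)).comp _ _ =
    (y.comp (Ext.mk₀ (ModuleCat.ofHom e.symm.toLinearMap : N ⟶ M)) (add_zero i)).comp _ _ at h2
  have h3 : (ModuleCat.ofHom e.symm.toLinearMap : N ⟶ M) ≫ (ModuleCat.ofHom e.toLinearMap : M ⟶ N) = 𝟙 N := by
    apply ModuleCat.hom_ext
    apply LinearMap.ext
    intro z
    simp
  rw [Ext.comp_assoc _ _ _ (add_zero i) (add_zero 0) (by simp), Ext.mk₀_comp_mk₀,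
    Ext.comp_assoc _ _ _ (add_zero i) (add_zero 0) (by simp), Ext.mk₀_comp_mk₀, h3,
    Ext.comp_mk₀_id, Ext.comp_mk₀_id] at h2
  exact h2

/-- the short complex of an injection -/
noncomputable abbrev injSC {A B : Type u} [AddCommGroup A] [Module R A] [AddCommGroup B] [Module R B] (f : A →ₗ[R] B) :
    ShortComplex (ModuleCat.{u} R) :=
  ShortComplex.mk (X₁ := ModuleCat.of R A) (X₂ := ModuleCat.of R B) (X₃ := ModuleCat.of R (B ⧸ LinearMap.range f))
    (ModuleCat.ofHom f) (ModuleCat.ofHom (LinearMap.range f).mkQ) (by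
      apply ModuleCat.hom_ext
      exact f.exact_map_mkQ_range.linearMap_comp_eq_zero)

lemma injSC_exact {A B : Type u} [AddCommGroup A] [Module R A] [AddCommGroup B] [Module R B] (f : A →ₗ[R] B)
    (hf : Function.Injective f) : (injSC f).ShortExact :=
  ModuleCat.shortComplex_shortExact _ f.exact_map_mkQ_range hf (Submodule.mkQ_surjective _)

lemma exists_inj (M : Type u) [AddCommGroup M] [Module R M] : ∃ (E : ModuleCat.{u} R) (f : M →ₗ[R] E),
    Module.Injective R E ∧ Function.Injective f := by
  obtain ⟨⟨J, hJ, f, hf⟩⟩ := EnoughInjectives.presentation (ModuleCat.of R M)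
  exact ⟨J, f.hom, Module.injective_module_of_injective_object R J, (ModuleCat.mono_iff_injective f).mp hf⟩

/-- the short complex of a submodule -/
noncomputable abbrev subSC {B : Type u} [AddCommGroup B] [Module R B] (p : Submodule R B) :
    ShortComplex (ModuleCat.{u} R) :=
  ShortComplex.mk (X₁ := ModuleCat.of R p) (X₂ := ModuleCat.of R B) (X₃ := ModuleCat.of R (B ⧸ p))
    (ModuleCat.ofHom p.subtype) (ModuleCat.ofHom p.mkQ) (by
      apply ModuleCat.hom_ext
      exact (LinearMap.exact_subtype_mkQ p).linearMap_comp_eq_zero)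

lemma subSC_exact {B : Type u} [AddCommGroup B] [Module R B] (p : Submodule R B) :
    (subSC p).ShortExact :=
  ModuleCat.shortComplex_shortExact _ (LinearMap.exact_subtype_mkQ p) Subtype.val_injective (Submodule.mkQ_surjective _)

lemma LC_ev_nat {M N : ModuleCat.{u} R} (g : M ⟶ N) (x : LC a 0 M) :
    LC.ev a N (LC.cmp a (Ext.mk₀ g) (add_zero 0) x) = g.hom (LC.ev a M x) := by
  obtain ⟨s, e, rfl⟩ := LC.exists_of x
  obtain ⟨f, rfl⟩ := (Ext.mk₀_bijective _ _).2 e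
  rw [LC.cmp_of, LC.ev_of, LC.ev_of, Ext.mk₀_comp_mk₀, ev_mk₀, ev_mk₀]
  rfl

lemma LC_zero3 {S : ShortComplex (ModuleCat.{u} R)} (hS : S.ShortExact) {i j : ℕ} (hij : i + 1 = j)
    (x : LC a i S.X₂) :
    LC.cmp a hS.extClass hij (LC.cmp a (Ext.mk₀ S.g) (add_zero i) x) = 0 := by
  obtain ⟨s, e, rfl⟩ := LC.exists_of x
  rw [LC.cmp_of, LC.cmp_of, Ext.comp_assoc _ _ _ (add_zero i) (zero_add 1) (by omega), hS.comp_extClass,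
    Ext.comp_zero, map_zero]

lemma tors_LC [IsNoetherianRing R] (i : ℕ) : ∀ (M : Type u) [AddCommGroup M] [Module R M], (∀ m : M, m ∈ Gam a M) →
    ∀ x : LC a (i+1) (ModuleCat.of R M), x = 0 := by
  induction i with
  | zero =>
    intro M _ _ hM x
    obtain ⟨E, f, hE, hf⟩ := exists_inj (R := R) M
    have hG := gam_injective a E
    let f' : M →ₗ[R] Gam a E := f.codRestrict _ (fun m => by
      obtain ⟨n, hn⟩ := hM m
      exact ⟨n, fun r hr => by rw [← map_smul, hn r hr, map_zero]⟩)
    have hf' : Function.Injective f' := fun x y h => hf (congrArg Subtype.val h)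
    have hS := injSC_exact f' hf'
    have := Module.injective_object_of_injective_module R (Gam a E)
    obtain ⟨y, rfl⟩ := LC.ex1 hS (rfl : 0 + 1 = 1) x (LC.injective_zero (M := ModuleCat.of R (Gam a E)) _)
    obtain ⟨m, hm⟩ := Submodule.Quotient.mk_surjective _ (LC.ev a _ y)
    have hmG : m ∈ Gam a (Gam a E) := by
      obtain ⟨n, hn⟩ := m.2
      exact ⟨n, fun r hr => Subtype.ext (hn r hr)⟩
    have hm2 : m ∈ LinearMap.range (LC.ev a (ModuleCat.of R (Gam a E))) := by
      rw [LC.ev_range]; exact hmG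
    obtain ⟨z, hz⟩ := hm2
    have hy : LC.cmp a (Ext.mk₀ (injSC f').g) (add_zero 0) z = y := by
      apply LC.ev_inj
      rw [LC_ev_nat, hz, ← hm]
      rfl
    rw [← hy]
    exact LC_zero3 hS _ z
  | succ i ih =>
    intro M _ _ hM x
    obtain ⟨E, f, hE, hf⟩ := exists_inj (R := R) M
    have hG := gam_injective a E
    let f' : M →ₗ[R] Gam a E := f.codRestrict _ (fun m => by
      obtain ⟨n, hn⟩ := hM m
      exact ⟨n, fun r hr => by rw [← map_smul, hn r hr, map_zero]⟩)
    have hf' : Function.Injective f' := fun x y h => hf (congrArg Subtype.val h)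
    have hS := injSC_exact f' hf'
    have := Module.injective_object_of_injective_module R (Gam a E)
    obtain ⟨y, rfl⟩ := LC.ex1 hS (rfl : i + 1 + 1 = i + 1 + 1) x (LC.injective_zero (M := ModuleCat.of R (Gam a E)) _)
    rw [ih _ _ y, map_zero]
    intro m
    obtain ⟨m, rfl⟩ := Submodule.Quotient.mk_surjective _ m
    obtain ⟨n, hn⟩ := m.2
    exact ⟨n, fun r hr => by rw [← Submodule.Quotient.mk_smul, show r • m = 0 from Subtype.ext (hn r hr)]; rfl⟩

lemma gam_quot [IsNoetherianRing R] (M : Type u) [AddCommGroup M] [Module R M] : Gam a (M ⧸ Gam a M) = ⊥ := by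
  rw [eq_bot_iff]
  intro x hx
  obtain ⟨x, rfl⟩ := Submodule.Quotient.mk_surjective _ x
  obtain ⟨n, hn⟩ := hx
  obtain ⟨k, hk⟩ := unif_tors a ((LinearMap.toSpanSingleton R M x).comp (Submodule.subtype (a ^ n))) (by
    rintro ⟨r, hr⟩
    have := hn r hr
    rw [← Submodule.Quotient.mk_smul, Submodule.Quotient.mk_eq_zero] at this
    exact this)
  rw [Submodule.mem_bot, Submodule.Quotient.mk_eq_zero]
  refine ⟨k + n, fun r hr => ?_⟩
  rw [pow_add] at hr
  induction hr using Submodule.mul_induction_on' with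
  | mem_mul_mem r hr s hs => rw [mul_smul]; exact hk r hr ⟨s, hs⟩
  | add r _ s _ h1 h2 => rw [add_smul, h1, h2, add_zero]

lemma quot_injective [IsNoetherianRing R] (E : Type u) [AddCommGroup E] [Module R E]
    [Module.Injective R E] : Module.Injective R (E ⧸ Gam a E) := by
  have := gam_injective a E
  obtain ⟨ρ, hρ⟩ := Module.Injective.out (Gam a E).subtype Subtype.val_injective (LinearMap.id : Gam a E →ₗ[R] Gam a E)
  let s : (E ⧸ Gam a E) →ₗ[R] E := (Gam a E).liftQ (LinearMap.id - (Gam a E).subtype.comp ρ) (by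
    intro x hx
    rw [LinearMap.mem_ker]
    have := congrArg Subtype.val (hρ ⟨x, hx⟩)
    simp only [Submodule.subtype_apply, LinearMap.id_apply] at this
    simp [this])
  have hs : ∀ y, (Gam a E).mkQ (s y) = y := by
    intro y
    obtain ⟨y, rfl⟩ := Submodule.Quotient.mk_surjective _ y
    change Submodule.Quotient.mk (y - (ρ y : E)) = _
    rw [Submodule.Quotient.eq]
    simp
  constructor
  intro X Y _ _ _ _ f hf g
  obtain ⟨h, hh⟩ := Module.Injective.out f hf (s.comp g)
  exact ⟨(Gam a E).mkQ.comp h, fun x => by rw [LinearMap.comp_apply, hh, LinearMap.comp_apply, hs]⟩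

lemma ext0_of_gam {M : ModuleCat.{u} R} (h : Gam a M = ⊥) (e : Ext (ModuleCat.of R (R ⧸ a)) M 0) : e = 0 := by
  apply ev_inj
  rw [map_zero, ← Submodule.mem_bot (R := R), ← h]
  refine ⟨1, fun r hr => ?_⟩
  rw [pow_one] at hr
  rw [← map_smul, ext_smul_eq_zero _ r hr, map_zero]

lemma LC0_of_gam {M : ModuleCat.{u} R} (h : Gam a M = ⊥) (e : LC a 0 M) : e = 0 := by
  apply LC.ev_inj
  rw [map_zero, ← Submodule.mem_bot (R := R), ← h, ← LC.ev_range]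
  exact ⟨e, rfl⟩

/-- embedding a torsion-free module in a trivial one -/
lemma T1 [IsNoetherianRing R] (M : Type u) [AddCommGroup M] [Module R M] (hM : Gam a M = ⊥) :
    ∃ (E : ModuleCat.{u} R) (f : M →ₗ[R] E), Function.Injective f ∧ (∀ i, ∀ x : LC a i E, x = 0) ∧
      (∀ i, ∀ x : Ext (ModuleCat.of R (R ⧸ a)) E i, x = 0) := by
  obtain ⟨E, f, hE, hf⟩ := exists_inj (R := R) M
  have h1 := quot_injective (a := a) E
  have h2 := Module.injective_object_of_injective_module R (E ⧸ Gam a E)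
  refine ⟨ModuleCat.of R (E ⧸ Gam a E), (Gam a E).mkQ.comp f, ?_, ?_, ?_⟩
  · rw [injective_iff_map_eq_zero]
    intro x hx
    rw [LinearMap.comp_apply, Submodule.mkQ_apply, Submodule.Quotient.mk_eq_zero] at hx
    obtain ⟨n, hn⟩ := hx
    rw [← Submodule.mem_bot (R := R), ← hM]
    exact ⟨n, fun r hr => hf (by rw [map_smul, hn r hr, map_zero])⟩
  · intro i x
    cases i with
    | zero => exact LC0_of_gam (M := ModuleCat.of R (E ⧸ Gam a E)) (gam_quot E) x
    | succ i => exact LC.injective_zero x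
  · intro i x
    cases i with
    | zero => exact ext0_of_gam (M := ModuleCat.of R (E ⧸ Gam a E)) (gam_quot E) x
    | succ i => exact Ext.eq_zero_of_injective x

lemma ext_zero_of_LC [IsNoetherianRing R] (i : ℕ) : ∀ (M : ModuleCat.{u} R), (∀ i, ∀ x : LC a i M, x = 0) →
    ∀ e : Ext (ModuleCat.of R (R ⧸ a)) M i, e = 0 := by
  have hgam : ∀ (M : ModuleCat.{u} R), (∀ i, ∀ x : LC a i M, x = 0) → Gam a M = ⊥ := by
    intro M h
    rw [← LC.ev_range, eq_bot_iff]
    rintro _ ⟨x, rfl⟩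
    rw [h 0 x, map_zero]; exact Submodule.zero_mem _
  induction i with
  | zero => exact fun M h e => ext0_of_gam (hgam M h) e
  | succ i ih =>
    intro M h e
    obtain ⟨E, f, hf, h1, h2⟩ := T1 (a := a) M (hgam M h)
    have hS := injSC_exact f hf
    obtain ⟨y, rfl⟩ := Ext.covariant_sequence_exact₁ _ hS e (h2 _ _) (rfl : i + 1 = i + 1)
    rw [ih _ _ y, Ext.zero_comp]
    intro j x
    obtain ⟨z, rfl⟩ := LC.ex3 hS (rfl : j + 1 = j + 1) x (h _ _)
    rw [h1 _ z, map_zero]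

lemma T [IsNoetherianRing R] (M : ModuleCat.{u} R) : ∃ N : ModuleCat.{u} R,
    (∀ i, Nonempty (LC a i N ≃ₗ[R] LC a (i+1) M)) ∧
    (CC a (ModuleCat.of R (LC a 0 M)) → (CC a M ↔ CC a N)) ∧
    (CC a M → CC a N → CC a (ModuleCat.of R (LC a 0 M))) := by
  obtain ⟨E, f, hf, h1, h2⟩ := T1 (a := a) (M ⧸ Gam a M) (gam_quot M)
  have hS := injSC_exact f hf
  have hS' := subSC_exact (Gam a M)
  have hCE : CC a E := fun i => by
    have : Subsingleton (Ext (ModuleCat.of R (R ⧸ a)) E i) := ⟨fun x y => by rw [h2 i x, h2 i y]⟩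
    infer_instance
  have htor := fun i => tors_LC (a := a) i (Gam a M) (fun m => by
    obtain ⟨n, hn⟩ := m.2
    exact ⟨n, fun r hr => Subtype.ext (hn r hr)⟩)
  refine ⟨ModuleCat.of R (E ⧸ LinearMap.range f), fun i => ⟨?_⟩, fun h0 => ⟨fun hM => ?_, fun hN => ?_⟩,
    fun hM hN => ?_⟩
  · have b1 : Function.Bijective (LC.cmp a hS.extClass (rfl : i + 1 = i + 1)) := by
      constructor
      · rw [injective_iff_map_eq_zero]
        intro x hx
        obtain ⟨y, rfl⟩ := LC.ex3 hS rfl x hx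
        rw [h1 _ y, map_zero]
      · intro x
        exact LC.ex1 hS rfl x (h1 _ _)
    have b2 : Function.Bijective (LC.cmp a (Ext.mk₀ (subSC (Gam a M)).g) (add_zero (i+1))) := by
      constructor
      · rw [injective_iff_map_eq_zero]
        intro x hx
        obtain ⟨y, rfl⟩ := LC.ex2 hS' x hx
        rw [htor _ y, map_zero]
      · intro x
        exact LC.ex3 hS' rfl x (htor _ _)
    exact (LinearEquiv.ofBijective _ b1).trans (LinearEquiv.ofBijective _ b2).symm
  · exact CC.right hS (CC.right hS' (h0.of_iso (LC.equivGam M)) hM) hCE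
  · exact CC.mid hS' (h0.of_iso (LC.equivGam M)) (CC.left hS hCE hN)
  · have h1 : CC a (ModuleCat.of R (Gam a M)) := CC.left hS' hM (CC.left hS hCE hN)
    exact CC.of_iso (N := ModuleCat.of R (LC a 0 M)) (LC.equivGam M).symm h1

end D2
end CofProof


namespace CofProof
section D4
open Abelian
variable {R : Type u} [CommRing R]

lemma AC.of_subsingleton (S : Set R) (A : Type u) [AddCommGroup A] [Module R A] [Subsingleton A] : AC S A :=
  ⟨inferInstance, inferInstance⟩

lemma AC.of_noeth (S : Set R) (A : Type u) [AddCommGroup A] [Module R A] [IsNoetherian R A] [IsArtinian R A] : AC S A :=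
  ⟨inferInstance, inferInstance⟩

lemma AC_hom [IsNoetherianRing R] {S : Set R} {A : ModuleCat.{u} R} (hA : AC S A) (n : ℕ) : AC S (Fin n → A) := by
  have := hA.1
  have := hA.2
  refine ⟨inferInstance, ?_⟩
  let φ : Submodule.torsionBySet R (Fin n → A) S →ₗ[R] (Fin n → Submodule.torsionBySet R A S) :=
    LinearMap.pi (fun j => tmap S (LinearMap.proj j))
  refine isNoetherian_of_injective φ ?_
  intro x y h
  apply Subtype.ext
  funext j
  exact congrArg Subtype.val (congrFun h j)

lemma AC_ext [IsNoetherianRing R] {S : Set R} (hS : S.Finite) {A : ModuleCat.{u} R} (hA : AC S A) (i : ℕ) :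
    ∀ (N : ModuleCat.{u} R) [Module.Finite R N], AC S (Ext N A i) := by
  induction i with
  | zero =>
    intro N _
    obtain ⟨n, f, hf⟩ := Module.Finite.exists_fin' R N
    refine (AC_hom hA n).of_injective
      ((LinearMap.pi (fun j => LinearMap.applyₗ (f (Pi.single j 1)))).comp
      ((Ext.linearEquiv₀ (R := R) (X := N) (Y := A)).trans
      (ModuleCat.homLinearEquiv (S := R))).toLinearMap) ?_
    rw [LinearMap.coe_comp]
    refine Function.Injective.comp ?_ (LinearEquiv.injective _)
    intro g h hgh
    have : g.comp f = h.comp f := by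
      apply LinearMap.pi_ext'
      intro j
      apply LinearMap.ext_ring
      exact congrFun hgh j
    apply LinearMap.ext
    intro y
    obtain ⟨y, rfl⟩ := hf y
    exact LinearMap.congr_fun this y
  | succ n ih =>
    intro N _
    obtain ⟨N, _, _, _, _, f, surjf⟩ := Module.exists_finite_presentation R N
    let exac := LinearMap.shortExact_shortComplexKer surjf
    exact AC.of_surjective hS (ih (ModuleCat.of R (LinearMap.ker f))) (exac.extClass.precompOfLinear R A (add_comm 1 n))
      (precomp_extClass_surjective_of_projective_X₂ A exac n)

lemma CC_of_AC [IsNoetherianRing R] {a : Ideal R} {S : Set R} (hS : S.Finite) (hSa : S ⊆ a)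
    {A : ModuleCat.{u} R} (hA : AC S A) : CC a A := by
  intro i
  have h := AC_ext hS hA i (ModuleCat.of R (R ⧸ a))
  have := h.2
  let φ : Ext (ModuleCat.of R (R ⧸ a)) A i →ₗ[R] Submodule.torsionBySet R (Ext (ModuleCat.of R (R ⧸ a)) A i) S :=
    LinearMap.id.codRestrict _ (fun e => by
      rw [Submodule.mem_torsionBySet_iff]
      rintro ⟨r, hr⟩
      exact ext_smul_eq_zero a r (hSa hr) e)
  exact isNoetherian_of_injective φ (fun x y h => congrArg Subtype.val h)

/-- the inductive statement -/
def PP (a : Ideal R) (S : Set R) (d : ℕ) (M : Type u) [AddCommGroup M] [Module R M] : Prop :=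
  (∀ p ∈ Module.support R M, Order.coheight p < (d : ℕ∞)) →
    (∀ i, d ≤ i → ∀ x : LC a i (ModuleCat.of R M), x = 0) ∧
    (∀ i, i + 1 = d → AC S (LC a i (ModuleCat.of R M)))

lemma LC_subsing (a : Ideal R) (M : Type u) [AddCommGroup M] [Module R M] [Subsingleton M] (i : ℕ)
    (x : LC a i (ModuleCat.of R M)) : x = 0 := by
  obtain ⟨s, e, rfl⟩ := LC.exists_of x
  have hz : Limits.IsZero (ModuleCat.of R M) := ModuleCat.isZero_of_subsingleton _
  have h0 : e = 0 := by
    rw [← Ext.comp_mk₀_id e, hz.eq_of_src (𝟙 _) 0, Ext.mk₀_zero, Ext.comp_zero]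
  rw [h0, map_zero]

lemma LC.ex2' (a : Ideal R) {A B C : ModuleCat.{u} R} (f : A ⟶ B) (g : B ⟶ C) (w : f ≫ g = 0)
    (h : (ShortComplex.mk f g w).ShortExact) {i : ℕ} (x : LC a i B)
    (hx : LC.cmp a (Ext.mk₀ g) (add_zero i) x = 0) :
    ∃ y : LC a i A, LC.cmp a (Ext.mk₀ f) (add_zero i) y = x := by
  have := @LC.ex2 _ _ a (ShortComplex.mk f g w) h i x
  dsimp only at this
  exact this hx

lemma LC.ex1' (a : Ideal R) {A B C : ModuleCat.{u} R} (f : A ⟶ B) (g : B ⟶ C) (w : f ≫ g = 0)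
    (h : (ShortComplex.mk f g w).ShortExact) : ∃ ε : Ext C A 1, ∀ {i : ℕ} (x : LC a (i+1) A)
    (_ : LC.cmp a (Ext.mk₀ f) (add_zero (i+1)) x = 0),
    ∃ y : LC a i C, LC.cmp a ε rfl y = x := by
  refine ⟨h.extClass, ?_⟩
  intro i x hx
  have := @LC.ex1 _ _ a (ShortComplex.mk f g w) h i _ rfl x
  dsimp only at this
  exact this hx

lemma LC.ex0' (a : Ideal R) {A B C : ModuleCat.{u} R} (f : A ⟶ B) (g : B ⟶ C) (w : f ≫ g = 0)
    (h : (ShortComplex.mk f g w).ShortExact) (x : LC a 0 A)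
    (hx : LC.cmp a (Ext.mk₀ f) (add_zero 0) x = 0) : x = 0 := by
  have := @LC.ex0 _ _ a (ShortComplex.mk f g w) h x
  dsimp only at this
  exact this hx

lemma mul_seq_gen (a : Ideal R) {A C : ModuleCat.{u} R} (x : R) (f : A ⟶ A) (hf : f = x • 𝟙 A)
    (g : A ⟶ C) (w : f ≫ g = 0)
    (h : (ShortComplex.mk f g w).ShortExact) :
    ∃ δ : ∀ i, LC a i C →ₗ[R] LC a (i+1) A, (∀ i z, x • z = 0 → ∃ y, δ i y = z) ∧
      (∀ z : LC a 0 A, x • z = 0 → z = 0) := by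
  have hker : ∀ i (z : LC a i A), x • z = 0 →
        LC.cmp a (Ext.mk₀ f) (add_zero i) z = 0 := by
    intro i z hz
    rw [hf]
    exact (LC.cmp_smul x z).trans hz
  obtain ⟨ε, hε⟩ := LC.ex1' a f g w h
  refine ⟨fun i => LC.cmp a ε rfl, ?_, ?_⟩
  · intro i z hz
    exact hε z (hker _ z hz)
  · intro z hz
    exact LC.ex0' a f g w h z (hker _ z hz)

lemma mul_seq (a : Ideal R) (N : Type u) [AddCommGroup N] [Module R N] (x : R)
    (hinj : Function.Injective (LinearMap.lsmul R N x)) :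
    ∃ δ : ∀ i, LC a i (ModuleCat.of R (N ⧸ LinearMap.range (LinearMap.lsmul R N x))) →ₗ[R]
        LC a (i+1) (ModuleCat.of R N), (∀ i z, x • z = 0 → ∃ y, δ i y = z) ∧
      (∀ z : LC a 0 (ModuleCat.of R N), x • z = 0 → z = 0) :=
  mul_seq_gen a x (ModuleCat.ofHom (LinearMap.lsmul R N x)) rfl
    (ModuleCat.ofHom (LinearMap.range (LinearMap.lsmul R N x)).mkQ) _ (injSC_exact _ hinj)

lemma LC.ex2_mod (a : Ideal R) {A B C : Type u} [AddCommGroup A] [Module R A] [AddCommGroup B] [Module R B]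
    [AddCommGroup C] [Module R C] (f : A →ₗ[R] B) (g : B →ₗ[R] C) (hf : Function.Injective f)
    (hg : Function.Surjective g) (hfg : Function.Exact f g) (i : ℕ) :
    ∃ (F : LC a i (ModuleCat.of R A) →ₗ[R] LC a i (ModuleCat.of R B))
      (G : LC a i (ModuleCat.of R B) →ₗ[R] LC a i (ModuleCat.of R C)),
      ∀ x, G x = 0 → ∃ y, F y = x :=
  ⟨LC.cmp a (Ext.mk₀ (ModuleCat.ofHom f)) (add_zero i),
    LC.cmp a (Ext.mk₀ (ModuleCat.ofHom g)) (add_zero i),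
    fun x hx => LC.ex2' a _ _ _ (ModuleCat.shortComplex_shortExact
        (ModuleCat.shortComplexOfCompEqZero f g hfg.linearMap_comp_eq_zero) hfg hf hg) x hx⟩

lemma PP_quot_case [IsNoetherianRing R] {a : Ideal R} {S : Set R} (hS : S.Finite) (hSa : Submodule.span R S = a)
    (d : ℕ) (ih : ∀ (M : Type u) [AddCommGroup M] [Module R M] [Module.Finite R M], PP a S d M)
    (N : Type u) [AddCommGroup N] [Module R N] [Module.Finite R N] (p : PrimeSpectrum R) (e : N ≃ₗ[R] R ⧸ p.1) :
    PP a S (d+1) N := by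
  intro hN
  have hp : p ∈ Module.support R N := by
    rw [Module.mem_support_iff_of_finite, e.annihilator_eq, Ideal.annihilator_quotient]
  have hpN : ∀ r ∈ p.1, ∀ n : N, r • n = 0 := by
    intro r hr n
    have h1 : r ∈ Module.annihilator R N := by
      rw [e.annihilator_eq, Ideal.annihilator_quotient]; exact hr
    exact Module.mem_annihilator.mp h1 n
  have hpd := hN p hp
  by_cases hap : a ≤ p.1
  · have htor : ∀ m : N, m ∈ Gam a N := fun m => ⟨1, fun r hr => hpN r (hap (by simpa using hr)) m⟩
    refine ⟨?_, ?_⟩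
    · intro i hi x
      obtain ⟨i, rfl⟩ : ∃ j, i = j + 1 := ⟨i - 1, by omega⟩
      exact tors_LC i N htor x
    · intro i hi
      obtain rfl : i = d := by omega
      cases i with
      | succ i =>
        have : Subsingleton (LC a (i+1) (ModuleCat.of R N)) :=
          ⟨fun x y => by rw [tors_LC i N htor x, tors_LC i N htor y]⟩
        exact AC.of_subsingleton _ _
      | zero =>
        have hmax : IsMax p := by
          rw [← Order.coheight_eq_zero]
          simpa using hpd
        have hm : p.1.IsMaximal := by
          obtain ⟨m, hm, hle⟩ := Ideal.exists_le_maximal p.1 p.2.ne_top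
          have : (⟨m, hm.isPrime⟩ : PrimeSpectrum R) ≤ p := hmax hle
          have h2 : p.1 = m := le_antisymm hle this
          rw [h2]; exact hm
        have hs : IsSimpleModule R (R ⧸ p.1) := by
          rw [isSimpleModule_iff_isCoatom]
          exact hm.out
        have : IsArtinian R (R ⧸ p.1) := inferInstance
        have : IsArtinian R N := isArtinian_of_injective e.toLinearMap e.injective
        exact (AC.of_noeth S N).of_injective (LC.ev a (ModuleCat.of R N)) (LC.ev_inj _)
  · obtain ⟨x, hxa, hxp⟩ := Set.not_subset.mp hap
    have hinj : Function.Injective (LinearMap.lsmul R N x) := by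
      rw [injective_iff_map_eq_zero]
      intro n hn
      apply e.injective
      have hn2 : x • n = 0 := hn
      have : x • e n = 0 := by rw [← map_smul, hn2, map_zero]
      obtain ⟨r, hr⟩ := Submodule.Quotient.mk_surjective _ (e n)
      rw [← hr, ← Submodule.Quotient.mk_smul, Submodule.Quotient.mk_eq_zero] at this
      rw [map_zero, ← hr, Submodule.Quotient.mk_eq_zero]
      exact (p.2.mem_or_mem this).resolve_left hxp
    obtain ⟨δ, hδ, hδ0⟩ := mul_seq a N x hinj
    obtain ⟨ih1, ih2⟩ := ih (N ⧸ LinearMap.range (LinearMap.lsmul R N x)) (by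
      intro q hq
      rw [Module.mem_support_iff_of_finite] at hq
      have hpq : p ≤ q := by
        intro r hr
        apply hq
        rw [Module.mem_annihilator]
        intro m
        obtain ⟨m, rfl⟩ := Submodule.Quotient.mk_surjective _ m
        rw [← Submodule.Quotient.mk_smul, hpN r hr]; rfl
      have hxq : x ∈ q.1 := by
        apply hq
        rw [Module.mem_annihilator]
        intro m
        obtain ⟨m, rfl⟩ := Submodule.Quotient.mk_surjective _ m
        rw [← Submodule.Quotient.mk_smul, Submodule.Quotient.mk_eq_zero]
        exact ⟨m, rfl⟩
      have hlt : p < q := lt_of_le_of_ne hpq (fun h => hxp (h ▸ hxq))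
      have h1 := Order.coheight_add_one_le hlt
      have h2 := h1.trans_lt hpd
      push_cast at h2
      exact lt_of_add_lt_add_right h2)
    have htors : ∀ i (z : LC a i (ModuleCat.of R N)), ∃ n, x ^ n • z = 0 := by
      intro i z
      obtain ⟨n, hn⟩ := LC.tors z
      exact ⟨n, hn _ (Ideal.pow_mem_pow hxa n)⟩
    have hzero : ∀ i, (∀ z : LC a i (ModuleCat.of R N), x • z = 0 → z = 0) →
        ∀ z : LC a i (ModuleCat.of R N), z = 0 := by
      intro i h z
      obtain ⟨n, hn⟩ := htors i z
      induction n with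
      | zero => simpa using hn
      | succ n ihn =>
        apply ihn
        apply h
        rw [← mul_smul, ← pow_succ', hn]
    constructor
    · intro i hi
      apply hzero
      intro z hz
      obtain ⟨j, rfl⟩ : ∃ j, i = j + 1 := ⟨i - 1, by omega⟩
      obtain ⟨y, rfl⟩ := hδ j z hz
      rw [ih1 j (by omega) y, map_zero]
    · intro i hi
      obtain rfl : i = d := by omega
      cases i with
      | zero =>
        have h0 := hzero 0 hδ0
        have : Subsingleton (LC a 0 (ModuleCat.of R N)) := ⟨fun x y => by rw [h0 x, h0 y]⟩
        exact AC.of_subsingleton _ _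
      | succ j =>
        have hq := ih2 j rfl
        have hr : AC S (LinearMap.range (δ j)) :=
          AC.of_surjective hS hq _ (LinearMap.surjective_rangeRestrict _)
        have hK : AC S (Submodule.torsionBy R (LC a (j+1) (ModuleCat.of R N)) x) := by
          have hle : Submodule.torsionBy R (LC a (j+1) (ModuleCat.of R N)) x ≤
              LinearMap.range (δ j) := by
            intro z hz
            exact hδ j z ((Submodule.mem_torsionBy_iff _ _).mp hz)
          exact hr.of_injective (Submodule.inclusion hle) (Submodule.inclusion_injective hle)
        refine ⟨art_of_torsion x (htors _) hK.1, ?_⟩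
        have := hK.2
        have hx : ∀ z : LC a (j+1) (ModuleCat.of R N), z ∈ Submodule.torsionBySet R _ S → x • z = 0 := by
          intro z hz
          rw [Submodule.torsionBySet_eq_torsionBySet_span, Submodule.mem_torsionBySet_iff] at hz
          exact hz ⟨x, by rw [← hSa] at hxa; exact hxa⟩
        let φ : Submodule.torsionBySet R (LC a (j+1) (ModuleCat.of R N)) S →ₗ[R]
            Submodule.torsionBySet R (Submodule.torsionBy R (LC a (j+1) (ModuleCat.of R N)) x) S :=
          LinearMap.codRestrict _ (LinearMap.codRestrict _ (Submodule.subtype _) (fun z => by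
            rw [Submodule.mem_torsionBy_iff]; exact hx z.1 z.2)) (fun z => by
            rw [Submodule.mem_torsionBySet_iff]
            intro s
            apply Subtype.ext
            exact (Submodule.mem_torsionBySet_iff _ _).mp z.2 s)
        exact isNoetherian_of_injective φ (fun u v h => Subtype.ext
          (congrArg (fun w => w.1.1) h))

lemma PP_all [IsNoetherianRing R] {a : Ideal R} {S : Set R} (hS : S.Finite) (hSa : Submodule.span R S = a)
    (d : ℕ) : ∀ (M : Type u) [AddCommGroup M] [Module R M] [Module.Finite R M], PP a S d M := by
  induction d with
  | zero =>
    intro M _ _ _ h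
    have : Module.support R M = ∅ := by
      rw [Set.eq_empty_iff_forall_notMem]
      intro p hp
      have := h p hp
      simp at this
    rw [Module.support_eq_empty_iff] at this
    exact ⟨fun i _ x => LC_subsing a M i x, fun i hi => by omega⟩
  | succ d ih =>
    intro M _ _ hM
    induction hM using IsNoetherianRing.induction_on_isQuotientEquivQuotientPrime R with
    | subsingleton N =>
      intro _
      refine ⟨fun i _ x => LC_subsing a N i x, fun i hi => ?_⟩
      have : Subsingleton (LC a i (ModuleCat.of R N)) :=
        ⟨fun x y => by rw [LC_subsing a N i x, LC_subsing a N i y]⟩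
      exact AC.of_subsingleton _ _
    | quotient N p e => exact PP_quot_case hS hSa d ih N p e
    | exact N₁ N₂ N₃ f g hf hg hfg h₁ h₃ =>
      intro h
      obtain ⟨a1, b1⟩ := h₁ (fun p hp => h p (Module.support_subset_of_injective f hf hp))
      obtain ⟨a3, b3⟩ := h₃ (fun p hp => h p (Module.support_subset_of_surjective g hg hp))
      refine ⟨fun i hi x => ?_, fun i hi => ?_⟩
      · obtain ⟨F, G, hFG⟩ := LC.ex2_mod a f g hf hg hfg i
        obtain ⟨y, rfl⟩ := hFG x (a3 i hi _)
        rw [a1 i hi y, map_zero]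
      · obtain ⟨F, G, hFG⟩ := LC.ex2_mod a f g hf hg hfg i
        exact AC.mid hS (b1 i hi) (b3 i hi) F G hFG

end D4
end CofProof


namespace CofProof
section D6
open Abelian
variable {R : Type u} [CommRing R] [IsNoetherianRing R] {a : Ideal R}

lemma CC_of_finite (M : ModuleCat.{u} R) [Module.Finite R M] : CC a M := by
  intro i
  have := ModuleCat.finite_ext R (ModuleCat.of R (R ⧸ a)) M i
  infer_instance

lemma CC_of_zero (M : ModuleCat.{u} R) (h : ∀ x : M, x = 0) : CC a M := by
  have : Subsingleton M := ⟨fun x y => by rw [h x, h y]⟩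
  exact CC_of_finite M

lemma base_facts (hdim : ringKrullDim R ≤ 2) (M : ModuleCat.{u} R) [Module.Finite R M] :
    (∀ i, 3 ≤ i → ∀ x : LC a i M, x = 0) ∧ ∃ S : Set R, S.Finite ∧ S ⊆ a ∧ AC S (LC a 2 M) := by
  obtain ⟨S, hS⟩ := IsNoetherian.noetherian a
  have hSa : ((S : Set R)) ⊆ a := by rw [← hS]; exact Submodule.subset_span
  obtain ⟨hz, hac⟩ := PP_all S.finite_toSet hS 3 M (by
    intro p _
    have h1 : (Order.coheight p : WithBot ℕ∞) ≤ 2 := (Order.coheight_le_krullDim p).trans hdim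
    have h2 : Order.coheight p ≤ (2 : ℕ∞) := WithBot.coe_le_coe.mp h1
    exact lt_of_le_of_lt h2 (by norm_num))
  exact ⟨hz, S, S.finite_toSet, hSa, hac 2 rfl⟩

lemma CC_two (hdim : ringKrullDim R ≤ 2) (M : ModuleCat.{u} R) [Module.Finite R M] :
    CC a (ModuleCat.of R (LC a 2 M)) := by
  obtain ⟨-, S, h1, h2, h3⟩ := base_facts (a := a) hdim M
  exact CC_of_AC (A := ModuleCat.of R (LC a 2 M)) h1 h2 h3

lemma CC_LC0 (M : ModuleCat.{u} R) [Module.Finite R M] :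
    CC a (ModuleCat.of R (LC a 0 M)) := by
  have : Module.Finite R (LC a 0 M) := Module.Finite.of_injective (LC.ev a M) (LC.ev_inj M)
  exact CC_of_finite _

lemma T_shift (M N : ModuleCat.{u} R) (h : ∀ i, Nonempty (LC a i N ≃ₗ[R] LC a (i+1) M)) (i j : ℕ) (hij : i + 1 = j) :
    Nonempty (LC a i N ≃ₗ[R] LC a j M) := by
  subst hij; exact h i

lemma LC_zero_shift (M N : ModuleCat.{u} R) (h : ∀ i, Nonempty (LC a i N ≃ₗ[R] LC a (i+1) M)) (k : ℕ)
    (hz : ∀ i, k + 1 ≤ i → ∀ x : LC a i M, x = 0) : ∀ i, k ≤ i → ∀ x : LC a i N, x = 0 := by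
  intro i hi x
  obtain ⟨e⟩ := h i
  apply e.injective
  rw [hz (i+1) (by omega) (e x), map_zero]

lemma CC_shift (M N : ModuleCat.{u} R) (h : ∀ i, Nonempty (LC a i N ≃ₗ[R] LC a (i+1) M)) (i j : ℕ) (hij : i + 1 = j) :
    CC a (ModuleCat.of R (LC a i N)) ↔ CC a (ModuleCat.of R (LC a j M)) := by
  obtain ⟨e⟩ := T_shift M N h i j hij
  exact ⟨CC.of_iso (M := ModuleCat.of R (LC a i N)) (N := ModuleCat.of R (LC a j M)) e,
    CC.of_iso (M := ModuleCat.of R (LC a j M)) (N := ModuleCat.of R (LC a i N)) e.symm⟩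

lemma CC_one (M : ModuleCat.{u} R) [Module.Finite R M]
    (hz : ∀ i, 3 ≤ i → ∀ x : LC a i M, x = 0)
    (c2 : CC a (ModuleCat.of R (LC a 2 M))) :
    CC a (ModuleCat.of R (LC a 1 M)) := by
  have c0 : CC a (ModuleCat.of R (LC a 0 M)) := CC_LC0 M
  have cM : CC a M := CC_of_finite M
  obtain ⟨N1, e1, f1, -⟩ := T (a := a) M
  obtain ⟨N2, e2, f2, g2⟩ := T (a := a) N1
  obtain ⟨N3, e3, f3, -⟩ := T (a := a) N2
  have cN1 : CC a N1 := (f1 c0).1 cM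
  have c02 : CC a (ModuleCat.of R (LC a 0 N2)) :=
    (CC_shift N1 N2 e2 0 1 rfl).2 ((CC_shift M N1 e1 1 2 rfl).2 c2)
  have z3' := LC_zero_shift N2 N3 e3 0 (LC_zero_shift N1 N2 e2 1 (LC_zero_shift M N1 e1 2 hz))
  have z3 : ∀ i, ∀ x : LC a i N3, x = 0 := fun i => z3' i (Nat.zero_le i)
  have cN3 : CC a N3 := fun i => by
    have : Subsingleton (Ext (ModuleCat.of R (R ⧸ a)) N3 i) :=
      ⟨fun x y => by rw [ext_zero_of_LC i N3 z3 x, ext_zero_of_LC i N3 z3 y]⟩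
    infer_instance
  have cN2 : CC a N2 := (f3 c02).2 cN3
  have c01 : CC a (ModuleCat.of R (LC a 0 N1)) := g2 cN1 cN2
  exact (CC_shift M N1 e1 0 1 rfl).1 c01

lemma CC_LC (hdim : ringKrullDim R ≤ 2) (M : ModuleCat.{u} R) [Module.Finite R M] (i : ℕ) :
    CC a (ModuleCat.of R (LC a i M)) := by
  obtain ⟨hz, -⟩ := base_facts (a := a) hdim M
  rcases Nat.lt_or_ge i 3 with h | h
  · interval_cases i
    · exact CC_LC0 M
    · exact CC_one M hz (CC_two hdim M)
    · exact CC_two hdim M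
  · exact CC_of_zero _ (hz i h)

end D6
end CofProof

theorem stmt7 {R : Type u} [CommRing R] [IsNoetherianRing R]
    (hdim : ringKrullDim R ≤ 2) (a : Ideal R) :
    ∀ (M : ModuleCat.{u} R), Module.Finite R M →
      ∀ i : ℕ, IsCofinite a ((localCohomology a i).obj M) := by
  open CofProof in
  intro M hM i
  constructor
  · intro p hp
    rw [Module.mem_support_iff_exists_annihilator] at hp
    obtain ⟨m, hm⟩ := hp
    obtain ⟨n, hn⟩ := LC.tors ((lcEquiv a i M).symm m)
    rw [PrimeSpectrum.mem_zeroLocus]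
    have h1 : a ^ n ≤ p.asIdeal := by
      refine le_trans (fun r hr => ?_) hm
      rw [Submodule.mem_annihilator_span_singleton]
      apply (lcEquiv a i M).symm.injective
      rw [map_smul, hn r hr, map_zero]
    exact p.2.le_of_pow_le h1
  · intro j
    have h := CC.of_iso (lcEquiv a i M) (CC_LC (a := a) hdim M i) j
    have : Module.Finite R (Abelian.Ext (ModuleCat.of R (R⧸a)) ((localCohomology a i).obj M) j) := inferInstance
    exact Module.Finite.equiv (extCmp (projectiveResolution (ModuleCat.of R (R⧸a))) ((localCohomology a i).obj M) j).symm
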